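/- arXiv:1211.3442 — 3 statements merged into one kernel-verified Lean document; each statement's English description precedes it below -/
import Mathlib

section
/- For every n, the number of matchings of [2n] avoiding both 123 and 231 equals the number of matchings of [2n] avoiding both 123 and 312, and likewise the number of set partitions of [n] avoiding both 123 and 231 equals the number avoiding both 123 and 312. Nevertheless, the pairs {123,231} and {123,312} are not shape-Wilf-equivalent: for the Ferrers board F ∈ F_5 having three columns of height 5 followed by two columns of height 4, the number of matchings of shape F avoiding {123,231} is 14, while the number avoiding {123,312} is 15. -/
/-! ### Patterns of length 3 and 4 as permutations (0-indexed values) -/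

def p123 : Equiv.Perm (Fin 3) :=
  ⟨![0,1,2], ![0,1,2], by intro x; fin_cases x <;> rfl, by intro x; fin_cases x <;> rfl⟩
def p132 : Equiv.Perm (Fin 3) :=
  ⟨![0,2,1], ![0,2,1], by intro x; fin_cases x <;> rfl, by intro x; fin_cases x <;> rfl⟩
def p213 : Equiv.Perm (Fin 3) :=
  ⟨![1,0,2], ![1,0,2], by intro x; fin_cases x <;> rfl, by intro x; fin_cases x <;> rfl⟩
def p231 : Equiv.Perm (Fin 3) :=
  ⟨![1,2,0], ![2,0,1], by intro x; fin_cases x <;> rfl, by intro x; fin_cases x <;> rfl⟩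
def p312 : Equiv.Perm (Fin 3) :=
  ⟨![2,0,1], ![1,2,0], by intro x; fin_cases x <;> rfl, by intro x; fin_cases x <;> rfl⟩
def p321 : Equiv.Perm (Fin 3) :=
  ⟨![2,1,0], ![2,1,0], by intro x; fin_cases x <;> rfl, by intro x; fin_cases x <;> rfl⟩
def p1342 : Equiv.Perm (Fin 4) :=
  ⟨![0,2,3,1], ![0,3,1,2], by intro x; fin_cases x <;> rfl, by intro x; fin_cases x <;> rfl⟩
def p1324 : Equiv.Perm (Fin 4) :=
  ⟨![0,2,1,3], ![0,2,1,3], by intro x; fin_cases x <;> rfl, by intro x; fin_cases x <;> rfl⟩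

/-! ### Perfect matchings of `[2n] = {1, …, 2n}` as finsets of pairs `(i,j)`, `i < j` -/

/-- `M` is a perfect matching of `{1, …, 2n}`. -/
def IsPerfectMatching (n : ℕ) (M : Finset (ℕ × ℕ)) : Prop :=
  (∀ p ∈ M, p.1 < p.2 ∧ 1 ≤ p.1 ∧ p.2 ≤ 2 * n) ∧
  ∀ x, 1 ≤ x → x ≤ 2 * n → ∃! p, p ∈ M ∧ (p.1 = x ∨ p.2 = x)

/-- The matching `M` contains the pattern `τ ∈ S_k`: there are
`i_1 < i_2 < ⋯ < i_{2k}` with `(i_a, i_{2k+1-τ(a)}) ∈ M` for all `1 ≤ a ≤ k`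
(written here 0-indexed). -/
def MatchContains {k : ℕ} (τ : Equiv.Perm (Fin k)) (M : Finset (ℕ × ℕ)) : Prop :=
  ∃ f : Fin (2 * k) → ℕ, StrictMono f ∧
    ∀ a : Fin k,
      (f ⟨a.1, by have := a.isLt; omega⟩,
       f ⟨2 * k - 1 - (τ a).1, by have := (τ a).isLt; omega⟩) ∈ M

def MatchAvoids {k : ℕ} (τ : Equiv.Perm (Fin k)) (M : Finset (ℕ × ℕ)) : Prop :=
  ¬ MatchContains τ M

/-! ### Dyck paths as lists of booleans (`true` = east step, `false` = south step) -/

/-- A Dyck path of semilength `n`, from `(0,n)` to `(n,0)`, staying weakly above `y = n - x`. -/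
def IsDyckPath (n : ℕ) (t : List Bool) : Prop :=
  t.length = 2 * n ∧ t.count true = n ∧
  ∀ i, (t.take i).count false ≤ (t.take i).count true

/-- The height (distance above the diagonal) of the `i`-th vertex of the path `t`. -/
def pathHeight (t : List Bool) (i : ℕ) : ℤ :=
  ((t.take i).count true : ℤ) - ((t.take i).count false : ℤ)

/-- `s` lies weakly below `t` (for paths of the same semilength). -/
def WeaklyBelow (s t : List Bool) : Prop := ∀ i, pathHeight s i ≤ pathHeight t i

/-- The shape of a matching of `[2n]`: an east step for each opener, a south step for
each closer. -/
def shapeOf (n : ℕ) (M : Finset (ℕ × ℕ)) : List Bool :=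
  (List.range (2 * n)).map fun x => decide ((x + 1) ∈ M.image Prod.fst)

/-- Number of returns of a path: south steps ending on the diagonal. -/
def returnsOf (t : List Bool) : ℕ :=
  ((Finset.range t.length).filter fun i =>
    t[i]? = some false ∧ (t.take (i+1)).count true = (t.take (i+1)).count false).card

/-- Height sequence of a path, as natural numbers. -/
def hseq (t : List Bool) (i : ℕ) : ℕ := (t.take i).count true - (t.take i).count false

/-- `η(F)`: the number of indices `0 ≤ i ≤ 2n` with `h_i = 2`. -/
def etaOf (n : ℕ) (t : List Bool) : ℕ :=
  ((Finset.range (2 * n + 1)).filter fun i => hseq t i = 2).card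

/-! ### Full rook placements on Ferrers boards -/

/-- The square in column `c`, row `r` (both 1-indexed from the bottom left) belongs to the
Ferrers board with border path `t ∈ F_n`. -/
def InBoard (n : ℕ) (t : List Bool) (c r : ℕ) : Prop :=
  1 ≤ c ∧ 1 ≤ r ∧ ∃ i, c ≤ (t.take i).count true ∧ (t.take i).count false + r ≤ n

/-- `R` is a full rook placement on the Ferrers board with border path `t ∈ F_n`:
one rook in each of the `n` rows and `n` columns. -/
def IsFullRookPlacement (n : ℕ) (t : List Bool) (R : Finset (ℕ × ℕ)) : Prop :=
  (∀ p ∈ R, InBoard n t p.1 p.2) ∧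
  (∀ c, 1 ≤ c → c ≤ n → ∃! p, p ∈ R ∧ p.1 = c) ∧
  (∀ r, 1 ≤ r → r ≤ n → ∃! p, p ∈ R ∧ p.2 = r)

/-- The rooks of `R` lying in the rectangle `Γ(V_i)` determined by the `i`-th border vertex. -/
def rectRooks (n : ℕ) (t : List Bool) (R : Finset (ℕ × ℕ)) (i : ℕ) : Finset (ℕ × ℕ) :=
  R.filter fun p => p.1 ≤ (t.take i).count true ∧ p.2 + (t.take i).count false ≤ n

/-- Length of the longest increasing sequence (in both coordinates) in a finite point set. -/
def lisLen (S : Finset (ℕ × ℕ)) : ℕ :=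
  (S.powerset.filter fun T => ∀ p ∈ T, ∀ q ∈ T, p.1 < q.1 → p.2 < q.2).sup Finset.card

/-- The full rook placement `R` on the board with border `t ∈ F_n` contains the pattern `τ`:
some rectangle `Γ(V_i)` contains an occurrence of `τ`. -/
def PlacementContains {k : ℕ} (τ : Equiv.Perm (Fin k)) (n : ℕ) (t : List Bool)
    (R : Finset (ℕ × ℕ)) : Prop :=
  ∃ i ≤ 2 * n, ∃ f : Fin k → ℕ × ℕ,
    (∀ a, f a ∈ R ∧ (f a).1 ≤ (t.take i).count true ∧ (f a).2 + (t.take i).count false ≤ n) ∧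
    (∀ a b : Fin k, a < b → (f a).1 < (f b).1) ∧
    (∀ a b : Fin k, τ a < τ b → (f a).2 < (f b).2)

def PlacementAvoids {k : ℕ} (τ : Equiv.Perm (Fin k)) (n : ℕ) (t : List Bool)
    (R : Finset (ℕ × ℕ)) : Prop :=
  ¬ PlacementContains τ n t R

/-- `R` is board-minimal on the board with border `t`: every peak corner square holds a rook. -/
def BoardMinimal (n : ℕ) (t : List Bool) (R : Finset (ℕ × ℕ)) : Prop :=
  ∀ i, t[i]? = some true → t[i+1]? = some false →
    ((t.take (i+1)).count true, n - (t.take (i+1)).count false) ∈ R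

/-- Board-minimal full rook placements on boards of `F_n` avoiding the pattern `σ`,
recorded as pairs (border path, rook set). -/
def MinPlacements (n : ℕ) {k : ℕ} (σ : Equiv.Perm (Fin k)) :
    Set (List Bool × Finset (ℕ × ℕ)) :=
  {tR | IsDyckPath n tR.1 ∧ IsFullRookPlacement n tR.1 tR.2 ∧ BoardMinimal n tR.1 tR.2 ∧
        PlacementAvoids σ n tR.1 tR.2}

/-! ### Pattern avoidance in permutations -/

def PermContains {n k : ℕ} (τ : Equiv.Perm (Fin k)) (π : Equiv.Perm (Fin n)) : Prop :=
  ∃ f : Fin k → Fin n, StrictMono f ∧ ∀ a b : Fin k, τ a < τ b → π (f a) < π (f b)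

def PermAvoids {n k : ℕ} (τ : Equiv.Perm (Fin k)) (π : Equiv.Perm (Fin n)) : Prop :=
  ¬ PermContains τ π

/-- The full rook placement associated to a permutation of `[n]`. -/
def permPlacement {n : ℕ} (π : Equiv.Perm (Fin n)) : Finset (ℕ × ℕ) :=
  Finset.univ.image fun i : Fin n => ((i : ℕ) + 1, (π i : ℕ) + 1)

/-! ### Matchings with fixed points -/

/-- A (not necessarily perfect) matching on `{1, …, m}`: pairwise disjoint pairs. -/
def IsPartialMatching (m : ℕ) (M : Finset (ℕ × ℕ)) : Prop :=
  (∀ p ∈ M, p.1 < p.2 ∧ 1 ≤ p.1 ∧ p.2 ≤ m) ∧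
  ∀ p ∈ M, ∀ q ∈ M, p ≠ q → p.1 ≠ q.1 ∧ p.1 ≠ q.2 ∧ p.2 ≠ q.1 ∧ p.2 ≠ q.2

/-- The fixed points (unmatched vertices) of a matching on `{1, …, m}`. -/
def fixedPts (m : ℕ) (M : Finset (ℕ × ℕ)) : Finset ℕ :=
  (Finset.Icc 1 m).filter fun x => ∀ p ∈ M, p.1 ≠ x ∧ p.2 ≠ x

/-- The matched vertices of a matching on `{1, …, m}`. -/
def matchedSet (m : ℕ) (M : Finset (ℕ × ℕ)) : Finset ℕ :=
  (Finset.Icc 1 m).filter fun x => ∃ p ∈ M, p.1 = x ∨ p.2 = x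

/-- The rank (1-based) of `x` inside the finset `S`. -/
def rankIn (S : Finset ℕ) (x : ℕ) : ℕ := (S.filter (· ≤ x)).card

/-- The matching obtained by removing the fixed points and relabeling increasingly. -/
def relabeled (m : ℕ) (M : Finset (ℕ × ℕ)) : Finset (ℕ × ℕ) :=
  M.image fun p => (rankIn (matchedSet m M) p.1, rankIn (matchedSet m M) p.2)

/-! ### Set partitions -/

/-- `(i,j)` is an arc of the set partition `P` of `{1, …, n}`: `i < j` lie in a common block
with no element of that block strictly between them. -/
def PartArc {n : ℕ} (P : Finpartition (Finset.Icc 1 n)) (i j : ℕ) : Prop :=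
  i < j ∧ ∃ B ∈ P.parts, i ∈ B ∧ j ∈ B ∧ ∀ x ∈ B, ¬(i < x ∧ x < j)

/-- The set partition `P` contains the pattern `τ ∈ S_k`. -/
def PartContains {k n : ℕ} (τ : Equiv.Perm (Fin k)) (P : Finpartition (Finset.Icc 1 n)) : Prop :=
  ∃ f : Fin (2 * k) → ℕ, StrictMono f ∧
    ∀ a : Fin k,
      PartArc P (f ⟨a.1, by have := a.isLt; omega⟩)
        (f ⟨2 * k - 1 - (τ a).1, by have := (τ a).isLt; omega⟩)

def PartAvoids {k n : ℕ} (τ : Equiv.Perm (Fin k)) (P : Finpartition (Finset.Icc 1 n)) : Prop :=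
  ¬ PartContains τ P

/-! ### Counting functions -/

/-- `|M_n(τ)|`: the number of `τ`-avoiding perfect matchings of `[2n]`. -/
noncomputable def mcount {k : ℕ} (τ : Equiv.Perm (Fin k)) (n : ℕ) : ℕ :=
  {M : Finset (ℕ × ℕ) | IsPerfectMatching n M ∧ MatchAvoids τ M}.ncard

/-- `|M_n(σ,τ)|`: the number of perfect matchings of `[2n]` avoiding both `σ` and `τ`. -/
noncomputable def mcount2 {k : ℕ} (σ τ : Equiv.Perm (Fin k)) (n : ℕ) : ℕ :=
  {M : Finset (ℕ × ℕ) | IsPerfectMatching n M ∧ MatchAvoids σ M ∧ MatchAvoids τ M}.ncard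

/-- `|P_n(τ)|`: the number of `τ`-avoiding set partitions of `[n]`. -/
noncomputable def pcount {k : ℕ} (τ : Equiv.Perm (Fin k)) (n : ℕ) : ℕ :=
  Nat.card {P : Finpartition (Finset.Icc 1 n) // PartAvoids τ P}

/-- `|P_n(σ,τ)|`: the number of set partitions of `[n]` avoiding both `σ` and `τ`. -/
noncomputable def pcount2 {k : ℕ} (σ τ : Equiv.Perm (Fin k)) (n : ℕ) : ℕ :=
  Nat.card {P : Finpartition (Finset.Icc 1 n) // PartAvoids σ P ∧ PartAvoids τ P}

/-- `|S_n(τ)|`: the number of `τ`-avoiding permutations of `[n]`. -/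
noncomputable def scount {k : ℕ} (τ : Equiv.Perm (Fin k)) (n : ℕ) : ℕ :=
  Nat.card {π : Equiv.Perm (Fin n) // PermAvoids τ π}

/-! ### Proof -/

def C123 (R : ℕ → ℕ → Prop) : Prop :=
  ∃ a b c d e f, (a < b ∧ b < c ∧ c < d ∧ d < e ∧ e < f) ∧ R a f ∧ R b e ∧ R c d
def C231 (R : ℕ → ℕ → Prop) : Prop :=
  ∃ a b c d e f, (a < b ∧ b < c ∧ c < d ∧ d < e ∧ e < f) ∧ R a e ∧ R b d ∧ R c f
def C312 (R : ℕ → ℕ → Prop) : Prop :=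
  ∃ a b c d e f, (a < b ∧ b < c ∧ c < d ∧ d < e ∧ e < f) ∧ R a d ∧ R b f ∧ R c e

theorem strictMono_six {a b c d e f : ℕ} (h : a < b ∧ b < c ∧ c < d ∧ d < e ∧ e < f) :
    StrictMono (![a, b, c, d, e, f] : Fin (2 * 3) → ℕ) := by
  intro i j hij
  fin_cases i <;> fin_cases j <;> simp at hij ⊢ <;> omega

theorem six_of_strictMono {g : Fin (2 * 3) → ℕ} (h : StrictMono g) :
    g 0 < g 1 ∧ g 1 < g 2 ∧ g 2 < g 3 ∧ g 3 < g 4 ∧ g 4 < g 5 :=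
  ⟨h (by decide), h (by decide), h (by decide), h (by decide), h (by decide)⟩

theorem gen123 (R : ℕ → ℕ → Prop) :
    (∃ f : Fin (2 * 3) → ℕ, StrictMono f ∧ ∀ a : Fin 3,
      R (f ⟨a.1, by have := a.isLt; omega⟩)
        (f ⟨2 * 3 - 1 - (p123 a).1, by have := (p123 a).isLt; omega⟩)) ↔ C123 R := by
  constructor
  · rintro ⟨g, hg, h⟩
    exact ⟨g 0, g 1, g 2, g 3, g 4, g 5, six_of_strictMono hg, h 0, h 1, h 2⟩
  · rintro ⟨a, b, c, d, e, f, h, h1, h2, h3⟩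
    refine ⟨![a, b, c, d, e, f], strictMono_six h, ?_⟩
    intro i
    fin_cases i
    exacts [h1, h2, h3]

theorem gen231 (R : ℕ → ℕ → Prop) :
    (∃ f : Fin (2 * 3) → ℕ, StrictMono f ∧ ∀ a : Fin 3,
      R (f ⟨a.1, by have := a.isLt; omega⟩)
        (f ⟨2 * 3 - 1 - (p231 a).1, by have := (p231 a).isLt; omega⟩)) ↔ C231 R := by
  constructor
  · rintro ⟨g, hg, h⟩
    exact ⟨g 0, g 1, g 2, g 3, g 4, g 5, six_of_strictMono hg, h 0, h 1, h 2⟩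
  · rintro ⟨a, b, c, d, e, f, h, h1, h2, h3⟩
    refine ⟨![a, b, c, d, e, f], strictMono_six h, ?_⟩
    intro i
    fin_cases i
    exacts [h1, h2, h3]

theorem gen312 (R : ℕ → ℕ → Prop) :
    (∃ f : Fin (2 * 3) → ℕ, StrictMono f ∧ ∀ a : Fin 3,
      R (f ⟨a.1, by have := a.isLt; omega⟩)
        (f ⟨2 * 3 - 1 - (p312 a).1, by have := (p312 a).isLt; omega⟩)) ↔ C312 R := by
  constructor
  · rintro ⟨g, hg, h⟩
    exact ⟨g 0, g 1, g 2, g 3, g 4, g 5, six_of_strictMono hg, h 0, h 1, h 2⟩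
  · rintro ⟨a, b, c, d, e, f, h, h1, h2, h3⟩
    refine ⟨![a, b, c, d, e, f], strictMono_six h, ?_⟩
    intro i
    fin_cases i
    exacts [h1, h2, h3]

/-- `R'` contains reversed arcs of `R`. -/
def RevRel (N : ℕ) (R R' : ℕ → ℕ → Prop) : Prop :=
  ∀ x y, R x y → x ≤ N ∧ y ≤ N ∧ R' (N - y) (N - x)

theorem C123.rev {N : ℕ} {R R' : ℕ → ℕ → Prop} (h : RevRel N R R') : C123 R → C123 R' := by
  rintro ⟨a, b, c, d, e, f, hh, h1, h2, h3⟩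
  have k1 := h _ _ h1
  have k2 := h _ _ h2
  have k3 := h _ _ h3
  exact ⟨N - f, N - e, N - d, N - c, N - b, N - a, by omega, k1.2.2, k2.2.2, k3.2.2⟩

theorem C231.rev {N : ℕ} {R R' : ℕ → ℕ → Prop} (h : RevRel N R R') : C231 R → C312 R' := by
  rintro ⟨a, b, c, d, e, f, hh, h1, h2, h3⟩
  have k1 := h _ _ h1
  have k2 := h _ _ h2
  have k3 := h _ _ h3
  exact ⟨N - f, N - e, N - d, N - c, N - b, N - a, by omega, k3.2.2, k1.2.2, k2.2.2⟩

theorem C312.rev {N : ℕ} {R R' : ℕ → ℕ → Prop} (h : RevRel N R R') : C312 R → C231 R' := by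
  rintro ⟨a, b, c, d, e, f, hh, h1, h2, h3⟩
  have k1 := h _ _ h1
  have k2 := h _ _ h2
  have k3 := h _ _ h3
  exact ⟨N - f, N - e, N - d, N - c, N - b, N - a, by omega, k2.2.2, k3.2.2, k1.2.2⟩

theorem m123 (M : Finset (ℕ × ℕ)) : MatchAvoids p123 M ↔ ¬ C123 (fun x y => (x, y) ∈ M) :=
  not_congr (gen123 (fun x y => (x, y) ∈ M))
theorem m231 (M : Finset (ℕ × ℕ)) : MatchAvoids p231 M ↔ ¬ C231 (fun x y => (x, y) ∈ M) :=
  not_congr (gen231 (fun x y => (x, y) ∈ M))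
theorem m312 (M : Finset (ℕ × ℕ)) : MatchAvoids p312 M ↔ ¬ C312 (fun x y => (x, y) ∈ M) :=
  not_congr (gen312 (fun x y => (x, y) ∈ M))
theorem q123 {n : ℕ} (P : Finpartition (Finset.Icc 1 n)) :
    PartAvoids p123 P ↔ ¬ C123 (PartArc P) := not_congr (gen123 (PartArc P))
theorem q231 {n : ℕ} (P : Finpartition (Finset.Icc 1 n)) :
    PartAvoids p231 P ↔ ¬ C231 (PartArc P) := not_congr (gen231 (PartArc P))
theorem q312 {n : ℕ} (P : Finpartition (Finset.Icc 1 n)) :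
    PartAvoids p312 P ↔ ¬ C312 (PartArc P) := not_congr (gen312 (PartArc P))

/-! matchings -/

def revM (n : ℕ) (M : Finset (ℕ × ℕ)) : Finset (ℕ × ℕ) :=
  M.image fun p => (2 * n + 1 - p.2, 2 * n + 1 - p.1)

theorem mem_revM {n : ℕ} {M : Finset (ℕ × ℕ)} (hM : IsPerfectMatching n M) {x y : ℕ} :
    (x, y) ∈ revM n M ↔ x ≤ 2 * n + 1 ∧ y ≤ 2 * n + 1 ∧ (2 * n + 1 - y, 2 * n + 1 - x) ∈ M := by
  unfold revM
  rw [Finset.mem_image]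
  constructor
  · rintro ⟨⟨a, b⟩, hp, h⟩
    have := hM.1 _ hp
    simp only [Prod.mk.injEq] at h this
    obtain ⟨rfl, rfl⟩ := h
    refine ⟨by omega, by omega, ?_⟩
    rwa [show 2 * n + 1 - (2 * n + 1 - a) = a by omega,
      show 2 * n + 1 - (2 * n + 1 - b) = b by omega]
  · rintro ⟨hx, hy, h⟩
    refine ⟨_, h, ?_⟩
    simp only [Prod.mk.injEq]
    omega

theorem revM_perf {n : ℕ} {M : Finset (ℕ × ℕ)} (hM : IsPerfectMatching n M) :
    IsPerfectMatching n (revM n M) := by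
  constructor
  · rintro ⟨x, y⟩ hp
    rw [mem_revM hM] at hp
    have := hM.1 _ hp.2.2
    simp only at this ⊢
    omega
  · intro x h1 h2
    obtain ⟨⟨a, b⟩, ⟨hp, h⟩, hu⟩ := hM.2 (2 * n + 1 - x) (by omega) (by omega)
    have hb := hM.1 _ hp
    simp only at h hb
    refine ⟨(2 * n + 1 - b, 2 * n + 1 - a), ⟨Finset.mem_image_of_mem _ hp, ?_⟩, ?_⟩
    · simp only
      omega
    · rintro ⟨c, d⟩ ⟨hq, h'⟩
      rw [mem_revM hM] at hq
      have := hu _ ⟨hq.2.2, by simp only at h' ⊢; omega⟩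
      simp only [Prod.mk.injEq] at this ⊢
      omega

theorem revM_revM {n : ℕ} {M : Finset (ℕ × ℕ)} (hM : IsPerfectMatching n M) :
    revM n (revM n M) = M := by
  ext ⟨x, y⟩
  rw [mem_revM (revM_perf hM), mem_revM hM]
  constructor
  · rintro ⟨h1, h2, h3, h4, h5⟩
    rwa [show 2 * n + 1 - (2 * n + 1 - x) = x by omega,
      show 2 * n + 1 - (2 * n + 1 - y) = y by omega] at h5
  · intro h
    have := hM.1 _ h
    simp only at this
    refine ⟨by omega, by omega, by omega, by omega, ?_⟩
    rwa [show 2 * n + 1 - (2 * n + 1 - x) = x by omega,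
      show 2 * n + 1 - (2 * n + 1 - y) = y by omega]

theorem revM_rel {n : ℕ} {M : Finset (ℕ × ℕ)} (hM : IsPerfectMatching n M) :
    RevRel (2 * n + 1) (fun x y => (x, y) ∈ revM n M) (fun x y => (x, y) ∈ M) := by
  intro x y h
  exact (mem_revM hM).1 h

theorem part_one (n : ℕ) : mcount2 p123 p231 n = mcount2 p123 p312 n := by
  unfold mcount2
  refine Set.ncard_congr (fun M _ => revM n M) ?_ ?_ ?_
  · rintro M ⟨hM, h1, h2⟩
    rw [m123] at h1
    rw [m231] at h2
    refine ⟨revM_perf hM, ?_, ?_⟩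
    · rw [m123]
      exact fun h => h1 (h.rev (revM_rel hM))
    · rw [m312]
      exact fun h => h2 (h.rev (revM_rel hM))
  · rintro M M' ⟨hM, _⟩ ⟨hM', _⟩ h
    rw [← revM_revM hM, ← revM_revM hM']
    exact congrArg _ h
  · rintro M ⟨hM, h1, h2⟩
    rw [m123] at h1
    rw [m312] at h2
    refine ⟨revM n M, ⟨revM_perf hM, ?_, ?_⟩, revM_revM hM⟩
    · rw [m123]
      exact fun h => h1 (h.rev (revM_rel hM))
    · rw [m231]
      exact fun h => h2 (h.rev (revM_rel hM))

/-! partitions -/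

def rv (n x : ℕ) : ℕ := if 1 ≤ x ∧ x ≤ n then n + 1 - x else x

theorem rv_rv (n x : ℕ) : rv n (rv n x) = x := by
  unfold rv
  split_ifs <;> omega

theorem mem_rvimg (n : ℕ) (B : Finset ℕ) (x : ℕ) : x ∈ B.image (rv n) ↔ rv n x ∈ B := by
  rw [Finset.mem_image]
  constructor
  · rintro ⟨a, ha, rfl⟩
    rwa [rv_rv]
  · intro h
    exact ⟨_, h, rv_rv n x⟩

theorem rvimg_rvimg (n : ℕ) (B : Finset ℕ) : (B.image (rv n)).image (rv n) = B := by
  ext x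
  rw [mem_rvimg, mem_rvimg, rv_rv]

theorem mem_rvparts (n : ℕ) (S : Finset (Finset ℕ)) (B : Finset ℕ) :
    B ∈ S.image (fun B => B.image (rv n)) ↔ B.image (rv n) ∈ S := by
  rw [Finset.mem_image]
  constructor
  · rintro ⟨a, ha, rfl⟩
    rwa [rvimg_rvimg]
  · intro h
    exact ⟨_, h, rvimg_rvimg n B⟩

theorem rv_mem {n x : ℕ} : rv n x ∈ Finset.Icc 1 n ↔ x ∈ Finset.Icc 1 n := by
  unfold rv
  simp only [Finset.mem_Icc]
  split_ifs <;> omega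

def revP {n : ℕ} (P : Finpartition (Finset.Icc 1 n)) : Finpartition (Finset.Icc 1 n) :=
  Finpartition.ofExistsUnique (P.parts.image (fun B => B.image (rv n)))
    (by
      intro B hB x hx
      rw [mem_rvparts] at hB
      have : rv n x ∈ Finset.Icc 1 n := P.le hB (by rwa [mem_rvimg, rv_rv])
      exact rv_mem.1 this)
    (by
      intro x hx
      obtain ⟨t, ⟨ht, hxt⟩, hu⟩ := P.existsUnique_mem (rv_mem.2 hx)
      refine ⟨t.image (rv n), ⟨Finset.mem_image_of_mem _ ht, by rwa [mem_rvimg]⟩, ?_⟩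
      rintro u ⟨hu1, hu2⟩
      rw [mem_rvparts] at hu1
      rw [← hu (u.image (rv n)) ⟨hu1, by rwa [mem_rvimg, rv_rv]⟩, rvimg_rvimg])
    (by
      rw [mem_rvparts, Finset.image_empty]
      exact P.bot_notMem)

theorem mem_revP {n : ℕ} (P : Finpartition (Finset.Icc 1 n)) (B : Finset ℕ) :
    B ∈ (revP P).parts ↔ B.image (rv n) ∈ P.parts := mem_rvparts n P.parts B

theorem revP_revP {n : ℕ} (P : Finpartition (Finset.Icc 1 n)) : revP (revP P) = P := by
  apply Finpartition.ext
  ext B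
  rw [mem_revP, mem_revP, rvimg_rvimg]

theorem rv_eq {n x : ℕ} (hx : x ∈ Finset.Icc 1 n) : rv n x = n + 1 - x := by
  rw [Finset.mem_Icc] at hx
  exact if_pos hx

theorem revP_rel {n : ℕ} (P : Finpartition (Finset.Icc 1 n)) :
    RevRel (n + 1) (PartArc (revP P)) (PartArc P) := by
  rintro x y ⟨hxy, B, hB, hx, hy, h⟩
  have hx' := (revP P).le hB hx
  have hy' := (revP P).le hB hy
  rw [mem_revP] at hB
  rw [← rv_eq hx', ← rv_eq hy']
  have ex := rv_eq hx'
  have ey := rv_eq hy'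
  rw [Finset.mem_Icc] at hx' hy'
  refine ⟨by omega, by omega, by omega, _, hB, by rwa [mem_rvimg, rv_rv],
    by rwa [mem_rvimg, rv_rv], ?_⟩
  intro z hz hz'
  have ez := rv_eq (P.le hB hz)
  rw [mem_rvimg] at hz
  exact h _ hz (by omega)

theorem part_two (n : ℕ) : pcount2 p123 p231 n = pcount2 p123 p312 n := by
  unfold pcount2
  refine Nat.card_congr ⟨fun P => ⟨revP P.1, ?_⟩, fun P => ⟨revP P.1, ?_⟩, ?_, ?_⟩
  · obtain ⟨P, h1, h2⟩ := P
    rw [q123] at h1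
    rw [q231] at h2
    rw [q123, q312]
    exact ⟨fun h => h1 (h.rev (revP_rel P)), fun h => h2 (h.rev (revP_rel P))⟩
  · obtain ⟨P, h1, h2⟩ := P
    rw [q123] at h1
    rw [q312] at h2
    rw [q123, q231]
    exact ⟨fun h => h1 (h.rev (revP_rel P)), fun h => h2 (h.rev (revP_rel P))⟩
  · intro P
    exact Subtype.ext (revP_revP P.1)
  · intro P
    exact Subtype.ext (revP_revP P.1)

/-! the board -/

def opn : Fin 5 → ℕ := ![1, 2, 3, 5, 6]
def cls : Fin 5 → ℕ := ![4, 7, 8, 9, 10]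

def mk5 (g : Fin 5 → Fin 5) : Finset (ℕ × ℕ) :=
  Finset.univ.image fun i => (opn i, cls (g i))

theorem opn_inj : ∀ i j, opn i = opn j → i = j := by decide
theorem cls_inj : ∀ i j, cls i = cls j → i = j := by decide
theorem opn_ne_cls : ∀ i j, opn i ≠ cls j := by decide
theorem opn_cls_range : ∀ i, 1 ≤ opn i ∧ opn i ≤ 10 ∧ 1 ≤ cls i ∧ cls i ≤ 10 := by decide
theorem opn_or_cls (x : ℕ) (h1 : 1 ≤ x) (h2 : x ≤ 10) : (∃ i, opn i = x) ∨ (∃ i, cls i = x) := by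
  interval_cases x <;> decide

theorem mem_mk5 {g : Fin 5 → Fin 5} {x y : ℕ} :
    (x, y) ∈ mk5 g ↔ ∃ i, opn i = x ∧ cls (g i) = y := by
  simp [mk5]

theorem mk5_inj {g g' : Fin 5 → Fin 5} (h : mk5 g = mk5 g') : g = g' := by
  funext i
  have : (opn i, cls (g i)) ∈ mk5 g' := h ▸ mem_mk5.2 ⟨i, rfl, rfl⟩
  obtain ⟨j, h1, h2⟩ := mem_mk5.1 this
  rw [opn_inj _ _ h1] at h2
  exact (cls_inj _ _ h2).symm

abbrev sh5 : List Bool := [true, true, true, false, true, true, false, false, false, false]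

theorem shape_iff (M : Finset (ℕ × ℕ)) : shapeOf 5 M = sh5 ↔
    (∀ i, opn i ∈ M.image Prod.fst) ∧ (∀ i, cls i ∉ M.image Prod.fst) := by
  unfold shapeOf
  simp only [Fin.forall_fin_succ, opn, cls, List.range_succ, sh5]
  simp [List.range_succ, -Finset.mem_image, -Prod.exists, -exists_and_right, -exists_eq_right]
  tauto

theorem perf_shape_iff (M : Finset (ℕ × ℕ)) : (IsPerfectMatching 5 M ∧ shapeOf 5 M = sh5) ↔
    ∃ g : Fin 5 → Fin 5, (Function.Injective g ∧ ∀ i, opn i < cls (g i)) ∧ mk5 g = M := by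
  rw [shape_iff]
  constructor
  · rintro ⟨hM, ho, hc⟩
    have key : ∀ i, ∃ j, (opn i, cls j) ∈ M := by
      intro i
      obtain ⟨⟨a, b⟩, hp, h⟩ := Finset.mem_image.1 (ho i)
      simp only at h
      subst h
      have hb := hM.1 _ hp
      simp only at hb
      rcases opn_or_cls b (by omega) (by omega) with ⟨j, hj⟩ | ⟨j, hj⟩
      · exfalso
        obtain ⟨⟨c, d⟩, hq, h⟩ := Finset.mem_image.1 (ho j)
        simp only at h
        have := (hM.2 b (by omega) (by omega)).unique ⟨hp, Or.inr rfl⟩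
          ⟨hq, Or.inl (by simp only; omega)⟩
        simp only [Prod.mk.injEq] at this
        omega
      · exact ⟨j, hj ▸ hp⟩
    choose g hg using key
    refine ⟨g, ⟨?_, fun i => (hM.1 _ (hg i)).1⟩, ?_⟩
    · intro i j hij
      have hb := hM.1 _ (hg i)
      have := (hM.2 (cls (g i)) (by simp only at hb; omega) (by simp only at hb; omega)).unique
        ⟨hg i, Or.inr rfl⟩ ⟨hg j, Or.inr (by rw [hij])⟩
      simp only [Prod.mk.injEq] at this
      exact opn_inj _ _ this.1
    · ext ⟨x, y⟩
      rw [mem_mk5]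
      constructor
      · rintro ⟨i, rfl, rfl⟩
        exact hg i
      · intro h
        have hb := hM.1 _ h
        simp only at hb
        rcases opn_or_cls x (by omega) (by omega) with ⟨j, rfl⟩ | ⟨j, rfl⟩
        · have := (hM.2 (opn j) (by omega) (by omega)).unique ⟨h, Or.inl rfl⟩ ⟨hg j, Or.inl rfl⟩
          simp only [Prod.mk.injEq] at this
          exact ⟨j, rfl, this.2.symm⟩
        · exact absurd (Finset.mem_image_of_mem Prod.fst h) (hc j)
  · rintro ⟨g, ⟨hi, hlt⟩, rfl⟩
    refine ⟨⟨?_, ?_⟩, ?_, ?_⟩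
    · rintro ⟨x, y⟩ h
      obtain ⟨i, rfl, rfl⟩ := mem_mk5.1 h
      exact ⟨hlt i, (opn_cls_range i).1, (opn_cls_range (g i)).2.2.2⟩
    · intro x h1 h2
      rcases opn_or_cls x h1 h2 with ⟨j, rfl⟩ | ⟨j, rfl⟩
      · refine ⟨(opn j, cls (g j)), ⟨mem_mk5.2 ⟨j, rfl, rfl⟩, Or.inl rfl⟩, ?_⟩
        rintro ⟨x, y⟩ ⟨h, h'⟩
        obtain ⟨i, rfl, rfl⟩ := mem_mk5.1 h
        rcases h' with h' | h'
        · rw [opn_inj _ _ h']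
        · exact absurd h'.symm (opn_ne_cls _ _)
      · obtain ⟨k, rfl⟩ := (Finite.injective_iff_surjective.1 hi) j
        refine ⟨(opn k, cls (g k)), ⟨mem_mk5.2 ⟨k, rfl, rfl⟩, Or.inr rfl⟩, ?_⟩
        rintro ⟨x, y⟩ ⟨h, h'⟩
        obtain ⟨i, rfl, rfl⟩ := mem_mk5.1 h
        rcases h' with h' | h'
        · exact absurd h' (opn_ne_cls _ _)
        · rw [hi (cls_inj _ _ h')]
    · intro i
      exact Finset.mem_image_of_mem Prod.fst (mem_mk5.2 ⟨i, rfl, rfl⟩)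
    · intro i h
      obtain ⟨⟨x, y⟩, hp, h⟩ := Finset.mem_image.1 h
      obtain ⟨j, rfl, rfl⟩ := mem_mk5.1 hp
      exact opn_ne_cls _ _ h

def D123 (g : Fin 5 → Fin 5) : Prop := ∃ i j k : Fin 5,
  opn i < opn j ∧ opn j < opn k ∧ opn k < cls (g k) ∧ cls (g k) < cls (g j) ∧ cls (g j) < cls (g i)
def D231 (g : Fin 5 → Fin 5) : Prop := ∃ i j k : Fin 5,
  opn i < opn j ∧ opn j < opn k ∧ opn k < cls (g j) ∧ cls (g j) < cls (g i) ∧ cls (g i) < cls (g k)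
def D312 (g : Fin 5 → Fin 5) : Prop := ∃ i j k : Fin 5,
  opn i < opn j ∧ opn j < opn k ∧ opn k < cls (g i) ∧ cls (g i) < cls (g k) ∧ cls (g k) < cls (g j)

instance : DecidablePred D123 := fun g => by unfold D123; infer_instance
instance : DecidablePred D231 := fun g => by unfold D231; infer_instance
instance : DecidablePred D312 := fun g => by unfold D312; infer_instance

theorem a123 (g : Fin 5 → Fin 5) : MatchAvoids p123 (mk5 g) ↔ ¬ D123 g := by
  rw [m123]
  refine not_congr ⟨?_, ?_⟩
  · rintro ⟨a, b, c, d, e, f, ⟨h1, h2, h3, h4, h5⟩, k1, k2, k3⟩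
    obtain ⟨i, rfl, rfl⟩ := mem_mk5.1 k1
    obtain ⟨j, rfl, rfl⟩ := mem_mk5.1 k2
    obtain ⟨k, rfl, rfl⟩ := mem_mk5.1 k3
    exact ⟨i, j, k, h1, h2, h3, h4, h5⟩
  · rintro ⟨i, j, k, h⟩
    exact ⟨_, _, _, _, _, _, h, mem_mk5.2 ⟨i, rfl, rfl⟩, mem_mk5.2 ⟨j, rfl, rfl⟩,
      mem_mk5.2 ⟨k, rfl, rfl⟩⟩

theorem a231 (g : Fin 5 → Fin 5) : MatchAvoids p231 (mk5 g) ↔ ¬ D231 g := by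
  rw [m231]
  refine not_congr ⟨?_, ?_⟩
  · rintro ⟨a, b, c, d, e, f, ⟨h1, h2, h3, h4, h5⟩, k1, k2, k3⟩
    obtain ⟨i, rfl, rfl⟩ := mem_mk5.1 k1
    obtain ⟨j, rfl, rfl⟩ := mem_mk5.1 k2
    obtain ⟨k, rfl, rfl⟩ := mem_mk5.1 k3
    exact ⟨i, j, k, h1, h2, h3, h4, h5⟩
  · rintro ⟨i, j, k, h⟩
    exact ⟨_, _, _, _, _, _, h, mem_mk5.2 ⟨i, rfl, rfl⟩, mem_mk5.2 ⟨j, rfl, rfl⟩,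
      mem_mk5.2 ⟨k, rfl, rfl⟩⟩

theorem a312 (g : Fin 5 → Fin 5) : MatchAvoids p312 (mk5 g) ↔ ¬ D312 g := by
  rw [m312]
  refine not_congr ⟨?_, ?_⟩
  · rintro ⟨a, b, c, d, e, f, ⟨h1, h2, h3, h4, h5⟩, k1, k2, k3⟩
    obtain ⟨i, rfl, rfl⟩ := mem_mk5.1 k1
    obtain ⟨j, rfl, rfl⟩ := mem_mk5.1 k2
    obtain ⟨k, rfl, rfl⟩ := mem_mk5.1 k3
    exact ⟨i, j, k, h1, h2, h3, h4, h5⟩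
  · rintro ⟨i, j, k, h⟩
    exact ⟨_, _, _, _, _, _, h, mem_mk5.2 ⟨i, rfl, rfl⟩, mem_mk5.2 ⟨j, rfl, rfl⟩,
      mem_mk5.2 ⟨k, rfl, rfl⟩⟩

/-- All functions that respect the board. -/
def good5 : Finset (Fin 5 → Fin 5) :=
  Finset.univ.filter fun g => (∀ i, opn i < cls (g i)) ∧ (∀ i j, g i = g j → i = j)

theorem count_aux (τ : Equiv.Perm (Fin 3)) (D : (Fin 5 → Fin 5) → Prop) [DecidablePred D]
    (hD : ∀ g, MatchAvoids τ (mk5 g) ↔ ¬ D g) :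
    {M : Finset (ℕ × ℕ) | IsPerfectMatching 5 M ∧ MatchAvoids p123 M ∧ MatchAvoids τ M ∧
        shapeOf 5 M = sh5}.ncard
      = (good5.filter fun g => ¬ D123 g ∧ ¬ D g).card := by
  rw [← Finset.card_image_of_injective _ (fun _ _ h => mk5_inj h), ← Set.ncard_coe_finset]
  congr 1
  ext M
  simp only [Set.mem_setOf_eq, Finset.coe_image, Set.mem_image, Finset.mem_coe,
    Finset.mem_filter, good5, Finset.mem_univ, true_and]
  constructor
  · rintro ⟨h1, h2, h3, h4⟩
    obtain ⟨g, ⟨hg, hl⟩, rfl⟩ := (perf_shape_iff M).1 ⟨h1, h4⟩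
    exact ⟨g, ⟨⟨hl, fun i j h => hg h⟩, (a123 g).1 h2, (hD g).1 h3⟩, rfl⟩
  · rintro ⟨g, ⟨⟨hl, hg⟩, h2, h3⟩, rfl⟩
    have := (perf_shape_iff (mk5 g)).2 ⟨g, ⟨fun i j h => hg i j h, hl⟩, rfl⟩
    exact ⟨this.1, (a123 g).2 h2, (hD g).2 h3, this.2⟩

theorem count14 : (good5.filter fun g => ¬ D123 g ∧ ¬ D231 g).card = 14 := by
  decide +kernel

theorem count15 : (good5.filter fun g => ¬ D123 g ∧ ¬ D312 g).card = 15 := by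
  decide +kernel

/-- The pairs `{123,231}` and `{123,312}` are avoided by equally many
matchings of `[2n]` and by equally many set partitions of `[n]` for every `n`, yet they are
not shape-Wilf-equivalent: on the board `F ∈ F_5` with three columns of height 5 followed
by two columns of height 4 they are avoided by `14` and `15` matchings, respectively. -/
theorem pairs_123_231_and_123_312 :
    (∀ n : ℕ, mcount2 p123 p231 n = mcount2 p123 p312 n) ∧
    (∀ n : ℕ, pcount2 p123 p231 n = pcount2 p123 p312 n) ∧
    {M : Finset (ℕ × ℕ) | IsPerfectMatching 5 M ∧ MatchAvoids p123 M ∧ MatchAvoids p231 M ∧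
        shapeOf 5 M = [true, true, true, false, true, true, false, false, false, false]}.ncard
      = 14 ∧
    {M : Finset (ℕ × ℕ) | IsPerfectMatching 5 M ∧ MatchAvoids p123 M ∧ MatchAvoids p312 M ∧
        shapeOf 5 M = [true, true, true, false, true, true, false, false, false, false]}.ncard
      = 15 := by
  exact ⟨part_one, part_two, (count_aux p231 D231 a231).trans count14,
    (count_aux p312 D312 a312).trans count15⟩
end

section
/- For every positive integer n and every Ferrers board F ∈ F_n with height sequence h_0…h_{2n} of its border D_F: if max_i h_i ≥ 5 then there are no matchings of shape F avoiding both 123 and 321, and if max_i h_i ≤ 4 then the number of matchings of shape F avoiding both 123 and 321 equals 2^{η(F)}, where η(F) = |{i : h_i = 2}|. Consequently, for every n ≥ 1 the total number of matchings of [2n] avoiding both 123 and 321 is (5^{n−1} + 1)/2, and Σ_{n≥0} |M_n(123,321)| zⁿ = (1−5z+2z²)/(1−6z+5z²). -/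
structure PM (x : ℕ) (t : List Bool) (L : List ℕ) (M : Finset (ℕ × ℕ)) : Prop where
  lt : ∀ a c, (a, c) ∈ M → a < c ∧ x ≤ c ∧ c < x + t.length ∧ (a ∈ L ∨ x ≤ a)
  i1 : ∀ a c d, (a, c) ∈ M → (a, d) ∈ M → c = d
  i2 : ∀ a b c, (a, c) ∈ M → (b, c) ∈ M → a = b
  i3 : ∀ a c d, (a, c) ∈ M → (c, d) ∈ M → False
  opn : ∀ i, t[i]? = some true → ∃ c, (x + i, c) ∈ M
  cls : ∀ i, t[i]? = some false → ∃ a, (a, x + i) ∈ M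
  own : ∀ a ∈ L, ∃ c, (a, c) ∈ M
  ord : L.Pairwise (fun a b => ∀ c d, (a, c) ∈ M → (b, d) ∈ M → c < d)
  cr : ∀ a b c a' b' c', (a, a') ∈ M → (b, b') ∈ M → (c, c') ∈ M →
    a < b → b < c → c < a' → a' < b' → b' < c' → False
  ne : ∀ a b c a' b' c', (a, a') ∈ M → (b, b') ∈ M → (c, c') ∈ M →
    a < b → b < c → c < c' → c' < b' → b' < a' → False

def Mono3 (a b c : ℕ) : Prop := (a < b ∧ b < c) ∨ (c < b ∧ b < a)

theorem PM.nil (x : ℕ) (M) : PM x [] [] M ↔ M = ∅ := by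
  constructor
  · intro h
    apply Finset.eq_empty_of_forall_notMem
    rintro ⟨a, c⟩ hm
    have := h.lt a c hm
    simp at this
    omega
  · rintro rfl
    constructor <;> simp

theorem PM.nil_cons (x a : ℕ) (L M) : ¬ PM x [] (a :: L) M := by
  intro h
  obtain ⟨c, hc⟩ := h.own a (by simp)
  have := h.lt a c hc
  simp at this
  omega

theorem PM.pop_nil (x : ℕ) (t M) : ¬ PM x (false :: t) [] M := by
  intro h
  obtain ⟨c, hc⟩ := h.cls 0 (by simp)
  have := h.lt _ _ hc
  simp at this
  omega

theorem PM.bad {x t L M} (h : PM x t L M) (hL : ∀ y ∈ L, y < x) {a b c : ℕ}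
    (hs : [a, b, c].Sublist L) (hm : Mono3 a b c) : False := by
  have ho := h.ord.sublist hs
  simp at ho
  have ha := hs.subset (show a ∈ [a,b,c] by simp)
  have hb := hs.subset (show b ∈ [a,b,c] by simp)
  have hc := hs.subset (show c ∈ [a,b,c] by simp)
  obtain ⟨a', ha'⟩ := h.own _ ha
  obtain ⟨b', hb'⟩ := h.own _ hb
  obtain ⟨c', hc'⟩ := h.own _ hc
  have h1 := ho.1.1 _ _ ha' hb'
  have h2 := ho.2 _ _ hb' hc'
  have := hL _ ha
  have := hL _ hb
  have := hL _ hc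
  have := h.lt _ _ ha'
  have := h.lt _ _ hb'
  have := h.lt _ _ hc'
  rcases hm with hm | hm
  · exact h.cr _ _ _ _ _ _ ha' hb' hc' hm.1 hm.2 (by omega) h1 h2
  · exact h.ne _ _ _ _ _ _ hc' hb' ha' hm.1 hm.2 (by omega) h1 h2

theorem PM.disj {x t L L' M} (h : PM x t L M) (h' : PM x t L' M) {a b : ℕ}
    (hs : [a, b].Sublist L) (hs' : [b, a].Sublist L') : False := by
  have ho := h.ord.sublist hs
  have ho' := h'.ord.sublist hs'
  simp at ho ho'
  obtain ⟨a', ha'⟩ := h.own a (hs.subset (by simp))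
  obtain ⟨b', hb'⟩ := h.own b (hs.subset (by simp))
  have := ho _ _ ha' hb'
  have := ho' _ _ hb' ha'
  omega

theorem PM.pop_mem {x t a L M} (h : PM x (false :: t) (a :: L) M) : (a, x) ∈ M := by
  obtain ⟨b, hb⟩ := h.cls 0 (by simp)
  have h1 := h.lt _ _ hb
  simp at hb h1
  rcases h1.2 with (rfl | h2) | h2
  · exact hb
  · exfalso
    obtain ⟨a', ha'⟩ := h.own a (by simp)
    have := (List.pairwise_cons.1 h.ord).1 b h2 _ _ ha' hb
    have := h.lt _ _ ha'
    omega
  · omega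

theorem PM.pop {x t a L M} (hL : ∀ y ∈ a :: L, y < x) (hn : (a :: L).Nodup)
    (h : PM x (false :: t) (a :: L) M) : PM (x+1) t L (M.erase (a, x)) := by
  have hm := h.pop_mem
  constructor
  · intro b c hbc
    simp only [Finset.mem_erase, ne_eq, Prod.mk.injEq] at hbc
    have h1 := h.lt _ _ hbc.2
    simp only [List.length_cons, List.mem_cons] at h1
    have h2 : c ≠ x := fun h3 => hbc.1 ⟨h.i2 _ _ _ (h3 ▸ hbc.2) hm, h3⟩
    have h3 : b ≠ a := fun h3 => hbc.1 ⟨h3, h.i1 _ _ _ (h3 ▸ hbc.2) hm⟩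
    have h4 : b ≠ x := fun h3 => h.i3 _ _ _ hm (h3 ▸ hbc.2)
    refine ⟨h1.1, by omega, by omega, ?_⟩
    rcases h1.2.2.2 with (h5 | h5) | h5
    · exact absurd h5 h3
    · exact Or.inl h5
    · right; omega
  · intro b c d h1 h2
    exact h.i1 _ _ _ (Finset.mem_of_mem_erase h1) (Finset.mem_of_mem_erase h2)
  · intro b c d h1 h2
    exact h.i2 _ _ _ (Finset.mem_of_mem_erase h1) (Finset.mem_of_mem_erase h2)
  · intro b c d h1 h2
    exact h.i3 _ _ _ (Finset.mem_of_mem_erase h1) (Finset.mem_of_mem_erase h2)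
  · intro i hi
    obtain ⟨c, hc⟩ := h.opn (i+1) (by simpa using hi)
    refine ⟨c, ?_⟩
    have := hL a (by simp)
    rw [Finset.mem_erase]
    refine ⟨by simp; omega, by convert hc using 2; omega⟩
  · intro i hi
    obtain ⟨c, hc⟩ := h.cls (i+1) (by simpa using hi)
    refine ⟨c, ?_⟩
    rw [Finset.mem_erase]
    refine ⟨by simp; omega, by convert hc using 2; omega⟩
  · intro b hb
    obtain ⟨c, hc⟩ := h.own b (by simp [hb])
    refine ⟨c, ?_⟩
    rw [Finset.mem_erase]
    refine ⟨?_, hc⟩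
    simp only [List.nodup_cons] at hn
    simp only [ne_eq, Prod.mk.injEq, not_and]
    rintro rfl
    exact absurd hb hn.1
  · refine (List.pairwise_cons.1 h.ord).2.imp ?_
    intro b c h0 d e h1 h2
    exact h0 _ _ (Finset.mem_of_mem_erase h1) (Finset.mem_of_mem_erase h2)
  · intro a b c a' b' c' h1 h2 h3
    exact h.cr _ _ _ _ _ _ (Finset.mem_of_mem_erase h1) (Finset.mem_of_mem_erase h2)
      (Finset.mem_of_mem_erase h3)
  · intro a b c a' b' c' h1 h2 h3
    exact h.ne _ _ _ _ _ _ (Finset.mem_of_mem_erase h1) (Finset.mem_of_mem_erase h2)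
      (Finset.mem_of_mem_erase h3)

theorem PM.order {x t L M} (h : PM x t L M) (R : ℕ → ℕ → Prop) (hR : L.Pairwise R)
    {a b a' b'} (ha : a ∈ L) (hb : b ∈ L) (ha' : (a, a') ∈ M) (hb' : (b, b') ∈ M)
    (hlt : a' < b') : R a b := by
  have hab : a ≠ b := by
    rintro rfl
    have := h.i1 _ _ _ ha' hb'
    omega
  have h1 := (hR.and h.ord)
  have h2 := List.pairwise_iff_getElem.1 h1
  obtain ⟨i, hi, rfl⟩ := List.getElem_of_mem ha
  obtain ⟨j, hj, rfl⟩ := List.getElem_of_mem hb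
  rcases lt_trichotomy i j with h3 | h3 | h3
  · exact (h2 i j hi hj h3).1
  · subst h3; exact absurd rfl hab
  · have := (h2 j i hj hi h3).2 _ _ hb' ha'
    omega

theorem PM.pop_inv {x t a L M} (hL : ∀ y ∈ a :: L, y < x) (hn : (a :: L).Nodup)
    (hg : L.Pairwise (fun b c => ¬ Mono3 a b c))
    (h : PM (x+1) t L M) : PM x (false :: t) (a :: L) (insert (a, x) M) := by
  have hax := hL a (by simp)
  have hLx : ∀ y ∈ L, y < x := fun y hy => hL y (by simp [hy])
  simp only [List.nodup_cons] at hn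
  have hna : ∀ c, (a, c) ∉ M := by
    intro c hc
    have := h.lt _ _ hc
    rcases this.2.2.2 with h1 | h1
    · exact hn.1 h1
    · omega
  have hnx : ∀ c, (x, c) ∉ M := by
    intro c hc
    have := h.lt _ _ hc
    rcases this.2.2.2 with h1 | h1
    · have := hLx _ h1; omega
    · omega
  have hcl : ∀ b c, (b, c) ∈ M → x < c := fun b c hc => by have := h.lt _ _ hc; omega
  have hmem : ∀ b c, (b, c) ∈ insert (a, x) M ↔ (b = a ∧ c = x) ∨ (b, c) ∈ M := by
    intro b c; simp
  have hin : ∀ b c, (b, c) ∈ M → b < x → b ∈ L := fun b c hc hb => by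
    have := h.lt _ _ hc
    rcases this.2.2.2 with h1 | h1
    · exact h1
    · omega
  constructor
  · intro b c hbc
    rw [hmem] at hbc
    rcases hbc with ⟨rfl, rfl⟩ | hbc
    · simp; omega
    · have h1 := h.lt _ _ hbc
      simp only [List.length_cons, List.mem_cons]
      refine ⟨h1.1, by omega, by omega, ?_⟩
      rcases h1.2.2.2 with h5 | h5
      · exact Or.inl (Or.inr h5)
      · right; omega
  · intro b c d h1 h2
    rw [hmem] at h1 h2
    rcases h1 with ⟨rfl, rfl⟩ | h1 <;> rcases h2 with ⟨h2, rfl⟩ | h2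
    · rfl
    · exact absurd h2 (hna _)
    · subst h2; exact absurd h1 (hna _)
    · exact h.i1 _ _ _ h1 h2
  · intro b c d h1 h2
    rw [hmem] at h1 h2
    rcases h1 with ⟨rfl, rfl⟩ | h1 <;> rcases h2 with ⟨h2, h3⟩ | h2
    · exact h2.symm
    · have := hcl _ _ h2; omega
    · have := hcl _ _ h1; omega
    · exact h.i2 _ _ _ h1 h2
  · intro b c d h1 h2
    rw [hmem] at h1 h2
    rcases h1 with ⟨rfl, rfl⟩ | h1 <;> rcases h2 with ⟨h2, h3⟩ | h2
    · omega
    · exact hnx _ h2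
    · have := hcl _ _ h1; omega
    · exact h.i3 _ _ _ h1 h2
  · intro i hi
    rcases i with _ | i
    · simp at hi
    · obtain ⟨c, hc⟩ := h.opn i (by simpa using hi)
      refine ⟨c, ?_⟩
      rw [hmem]; right; convert hc using 2; omega
  · intro i hi
    rcases i with _ | i
    · exact ⟨a, by simp⟩
    · obtain ⟨c, hc⟩ := h.cls i (by simpa using hi)
      refine ⟨c, ?_⟩
      rw [hmem]; right; convert hc using 2; omega
  · intro b hb
    simp only [List.mem_cons] at hb
    rcases hb with rfl | hb
    · exact ⟨x, by simp⟩
    · obtain ⟨c, hc⟩ := h.own b hb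
      exact ⟨c, by simp [hc]⟩
  · rw [List.pairwise_cons]
    constructor
    · intro b hb c d h1 h2
      rw [hmem] at h1 h2
      rcases h1 with ⟨_, rfl⟩ | h1
      · rcases h2 with ⟨rfl, _⟩ | h2
        · exact absurd hb hn.1
        · exact hcl _ _ h2
      · exact absurd h1 (hna _)
    · refine h.ord.imp_of_mem ?_
      intro b c hb hc h0 d e h1 h2
      rw [hmem] at h1 h2
      rcases h1 with ⟨rfl, rfl⟩ | h1 
      · exact absurd hb hn.1
      · rcases h2 with ⟨rfl, rfl⟩ | h2
        · exact absurd hc hn.1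
        · exact h0 _ _ h1 h2
  · intro p q r p' q' r' h1 h2 h3 hpq hqr hrp hpq' hqr'
    rw [hmem] at h1 h2 h3
    rcases h1 with ⟨rfl, rfl⟩ | h1
    · rcases h2 with ⟨h2, h4⟩ | h2
      · omega
      · rcases h3 with ⟨h3, h4⟩ | h3
        · omega
        · exact h.order _ hg (hin _ _ h2 (by omega)) (hin _ _ h3 (by omega)) h2 h3 hqr'
            (Or.inl ⟨hpq, hqr⟩)
    · have := hcl _ _ h1
      rcases h2 with ⟨h2, h4⟩ | h2
      · omega
      · rcases h3 with ⟨h3, h4⟩ | h3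
        · omega
        · exact h.cr _ _ _ _ _ _ h1 h2 h3 hpq hqr hrp hpq' hqr'
  · intro p q r p' q' r' h1 h2 h3 hpq hqr hrp hpq' hqr'
    rw [hmem] at h1 h2 h3
    rcases h3 with ⟨rfl, rfl⟩ | h3
    · rcases h2 with ⟨h2, h4⟩ | h2
      · omega
      · rcases h1 with ⟨h1, h4⟩ | h1
        · omega
        · exact h.order _ hg (hin _ _ h2 (by omega)) (hin _ _ h1 (by omega)) h2 h1 hqr'
            (Or.inr ⟨hpq, hqr⟩)
    · have := hcl _ _ h3
      rcases h2 with ⟨h2, h4⟩ | h2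
      · omega
      · rcases h1 with ⟨h1, h4⟩ | h1
        · omega
        · exact h.ne _ _ _ _ _ _ h1 h2 h3 hpq hqr hrp hpq' hqr'

theorem PM.pop_card {x t a L} (hL : ∀ y ∈ a :: L, y < x) (hn : (a :: L).Nodup)
    (hg : L.Pairwise (fun b c => ¬ Mono3 a b c)) :
    {M | PM x (false :: t) (a :: L) M}.encard = {M | PM (x+1) t L M}.encard := by
  have hnm : ∀ M, PM (x+1) t L M → (a, x) ∉ M := by
    intro M hM h1
    have := hM.lt _ _ h1
    omega
  have : {M | PM x (false :: t) (a :: L) M} = (fun M => insert (a, x) M) '' {M | PM (x+1) t L M} := by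
    ext M
    constructor
    · intro h
      exact ⟨_, PM.pop hL hn h, Finset.insert_erase (PM.pop_mem h)⟩
    · rintro ⟨M', h, rfl⟩
      exact PM.pop_inv hL hn hg h
  rw [this]
  apply Set.InjOn.encard_image
  intro M1 h1 M2 h2 h
  have h' : insert (a, x) M1 = insert (a, x) M2 := h
  rw [← Finset.erase_insert (hnm _ h1), ← Finset.erase_insert (hnm _ h2), h']

theorem split_exists (R : ℕ → ℕ → Prop) (p : ℕ → Prop) (L : List ℕ) (h : L.Pairwise R)
    (hp : ∀ a ∈ L, ∀ b ∈ L, R a b → p b → p a) :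
    ∃ L1 L2, L = L1 ++ L2 ∧ (∀ a ∈ L1, p a) ∧ ∀ b ∈ L2, ¬ p b := by
  induction L with
  | nil => exact ⟨[], [], rfl, by simp, by simp⟩
  | cons a L ih =>
    rw [List.pairwise_cons] at h
    by_cases hpa : p a
    · obtain ⟨L1, L2, h1, h2, h3⟩ := ih h.2 (fun a ha b hb => hp a (by simp [ha]) b (by simp [hb]))
      refine ⟨a :: L1, L2, by simp [h1], ?_, h3⟩
      simpa using ⟨hpa, h2⟩
    · refine ⟨[], a :: L, rfl, by simp, ?_⟩
      intro b hb hpb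
      simp only [List.mem_cons] at hb
      rcases hb with rfl | hb
      · exact hpa hpb
      · exact hpa (hp a (by simp) b (by simp [hb]) (h.1 b hb) hpb)

theorem PM.ins {x t L M} (hL : ∀ y ∈ L, y < x) :
    PM x (true :: t) L M ↔ ∃ L1 L2, L = L1 ++ L2 ∧ PM (x+1) t (L1 ++ x :: L2) M := by
  constructor
  · intro h
    obtain ⟨c, hc⟩ := h.opn 0 (by simp)
    simp only [add_zero] at hc
    obtain ⟨L1, L2, rfl, h2, h3⟩ := split_exists _ (fun a => ∀ d, (a, d) ∈ M → d < c) L h.ord (by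
      intro a ha b hb hab hpb d hd
      obtain ⟨e, he⟩ := h.own b hb
      have := hpb e he
      have := hab _ _ hd he
      omega)
    refine ⟨L1, L2, rfl, ?_⟩
    refine ⟨?_, h.i1, h.i2, h.i3, ?_, ?_, ?_, ?_, h.cr, h.ne⟩
    · intro a d had
      have h1 := h.lt _ _ had
      have h4 : d ≠ x := by rintro rfl; exact h.i3 _ _ _ had hc
      simp only [List.length_cons, List.mem_append, List.mem_cons] at h1 ⊢
      refine ⟨h1.1, by omega, by omega, ?_⟩
      rcases h1.2.2.2 with (h5 | h5) | h5
      · exact Or.inl (Or.inl h5)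
      · exact Or.inl (Or.inr (Or.inr h5))
      · rcases h5.eq_or_lt with h6 | h6
        · exact Or.inl (Or.inr (Or.inl h6.symm))
        · exact Or.inr h6
    · intro i hi
      obtain ⟨d, hd⟩ := h.opn (i+1) (by simpa using hi)
      exact ⟨d, by convert hd using 2; omega⟩
    · intro i hi
      obtain ⟨d, hd⟩ := h.cls (i+1) (by simpa using hi)
      exact ⟨d, by convert hd using 2; omega⟩
    · intro a ha
      simp only [List.mem_append, List.mem_cons] at ha
      rcases ha with ha | rfl | ha
      · exact h.own a (by simp [ha])
      · exact ⟨c, hc⟩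
      · exact h.own a (by simp [ha])
    · have ho := List.pairwise_append.1 h.ord
      rw [List.pairwise_append, List.pairwise_cons]
      refine ⟨ho.1, ⟨?_, ho.2.1⟩, ?_⟩
      · intro b hb d e hd he
        have := h.i1 _ _ _ hc hd
        subst this
        have h5 := h3 b hb
        push Not at h5
        obtain ⟨e', he', h6⟩ := h5
        have := h.i1 _ _ _ he he'
        subst this
        rcases h6.eq_or_lt with h7 | h7
        · subst h7
          have := h.i2 _ _ _ hc he
          have := hL b (by simp [hb])
          omega
        · exact h7
      · intro a ha b hb
        simp only [List.mem_cons] at hb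
        rcases hb with rfl | hb
        · intro d e hd he
          have := h.i1 _ _ _ hc he
          subst this
          exact h2 a ha d hd
        · exact ho.2.2 a ha b hb
  · rintro ⟨L1, L2, rfl, h⟩
    refine ⟨?_, h.i1, h.i2, h.i3, ?_, ?_, ?_, ?_, h.cr, h.ne⟩
    · intro a d had
      have h1 := h.lt _ _ had
      simp only [List.length_cons, List.mem_append, List.mem_cons] at h1 ⊢
      refine ⟨h1.1, by omega, by omega, ?_⟩
      rcases h1.2.2.2 with (h5 | h5 | h5) | h5
      · exact Or.inl (Or.inl h5)
      · right; omega
      · exact Or.inl (Or.inr h5)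
      · right; omega
    · intro i hi
      rcases i with _ | i
      · exact h.own x (by simp)
      · obtain ⟨d, hd⟩ := h.opn i (by simpa using hi)
        exact ⟨d, by convert hd using 2; omega⟩
    · intro i hi
      rcases i with _ | i
      · simp at hi
      · obtain ⟨d, hd⟩ := h.cls i (by simpa using hi)
        exact ⟨d, by convert hd using 2; omega⟩
    · intro a ha
      simp only [List.mem_append] at ha
      exact h.own a (by simp only [List.mem_append, List.mem_cons]; tauto)
    · exact h.ord.sublist (by simp)

structure Vec7 where
  f0 : ℕ
  f1 : ℕ
  f2 : ℕ
  p3 : ℕ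
  q3 : ℕ
  p4 : ℕ
  q4 : ℕ

def vec : List Bool → Vec7
  | [] => ⟨1, 0, 0, 0, 0, 0, 0⟩
  | true :: t => ⟨(vec t).f1, 2 * (vec t).f2, (vec t).p3 + (vec t).q3, 0,
      (vec t).p4 + (vec t).q4, 0, 0⟩
  | false :: t => ⟨0, (vec t).f0, (vec t).f1, (vec t).f2, (vec t).f2, (vec t).p3, (vec t).q3⟩

theorem PM.bad5 {x t a b c d e M} (h : PM x t [a, b, c, d, e] M)
    (hL : ∀ y ∈ [a, b, c, d, e], y < x) (hn : [a, b, c, d, e].Nodup) : False := by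
  have h1 : ¬ Mono3 a b c := fun hm => h.bad hL (by simp) hm
  have h2 : ¬ Mono3 a b d := fun hm => h.bad hL (by repeat (first | exact List.nil_sublist _ | exact List.Sublist.refl _ | apply List.Sublist.cons_cons | apply List.Sublist.cons)) hm
  have h3 : ¬ Mono3 a b e := fun hm => h.bad hL (by repeat (first | exact List.nil_sublist _ | exact List.Sublist.refl _ | apply List.Sublist.cons_cons | apply List.Sublist.cons)) hm
  have h4 : ¬ Mono3 a c d := fun hm => h.bad hL (by repeat (first | exact List.nil_sublist _ | exact List.Sublist.refl _ | apply List.Sublist.cons_cons | apply List.Sublist.cons)) hm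
  have h5 : ¬ Mono3 a c e := fun hm => h.bad hL (by repeat (first | exact List.nil_sublist _ | exact List.Sublist.refl _ | apply List.Sublist.cons_cons | apply List.Sublist.cons)) hm
  have h6 : ¬ Mono3 a d e := fun hm => h.bad hL (by repeat (first | exact List.nil_sublist _ | exact List.Sublist.refl _ | apply List.Sublist.cons_cons | apply List.Sublist.cons)) hm
  have h7 : ¬ Mono3 b c d := fun hm => h.bad hL (by repeat (first | exact List.nil_sublist _ | exact List.Sublist.refl _ | apply List.Sublist.cons_cons | apply List.Sublist.cons)) hm
  have h8 : ¬ Mono3 b c e := fun hm => h.bad hL (by repeat (first | exact List.nil_sublist _ | exact List.Sublist.refl _ | apply List.Sublist.cons_cons | apply List.Sublist.cons)) hm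
  have h9 : ¬ Mono3 b d e := fun hm => h.bad hL (by repeat (first | exact List.nil_sublist _ | exact List.Sublist.refl _ | apply List.Sublist.cons_cons | apply List.Sublist.cons)) hm
  have h0 : ¬ Mono3 c d e := fun hm => h.bad hL (by repeat (first | exact List.nil_sublist _ | exact List.Sublist.refl _ | apply List.Sublist.cons_cons | apply List.Sublist.cons)) hm
  simp only [List.nodup_cons, List.mem_cons, not_or, List.not_mem_nil] at hn
  unfold Mono3 at *
  grind

theorem encard_zero {α : Type*} {p : α → Prop} (h : ∀ a, ¬ p a) : {a | p a}.encard = ((0 : ℕ) : ℕ∞) := by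
  simp [h]

theorem encard_or {α : Type*} {p q : α → Prop} {r : α → Prop} {m n : ℕ} (hr : ∀ a, r a ↔ p a ∨ q a)
    (hp : {a | p a}.encard = m)
    (hq : {a | q a}.encard = n) (h : ∀ a, p a → q a → False) :
    {a | r a}.encard = ((m + n : ℕ) : ℕ∞) := by
  have : {a | r a} = {a | p a} ∪ {a | q a} := by ext a; simp [hr]
  rw [this, Set.encard_union_eq, hp, hq]
  · simp
  · rw [Set.disjoint_left]; exact h

theorem PM.card_vec (t : List Bool) : ∀ x : ℕ,
    {M | PM x t [] M}.encard = (vec t).f0 ∧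
    (∀ a, a < x → {M | PM x t [a] M}.encard = (vec t).f1) ∧
    (∀ a b, a < x → b < x → a ≠ b → {M | PM x t [a, b] M}.encard = (vec t).f2) ∧
    (∀ a b c, a < x → b < x → c < x → a ≠ c → a < b → c < b →
      {M | PM x t [a, b, c] M}.encard = (vec t).p3) ∧
    (∀ a b c, a < x → b < x → c < x → a ≠ c → b < a → b < c →
      {M | PM x t [a, b, c] M}.encard = (vec t).q3) ∧
    (∀ a b c d, a < x → b < x → c < x → d < x → a ≠ d → b < a → a < c → b < d → d < c →
      {M | PM x t [a, b, c, d] M}.encard = (vec t).p4) ∧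
    (∀ a b c d, a < x → b < x → c < x → d < x → a ≠ d → c < a → a < b → c < d → d < b →
      {M | PM x t [a, b, c, d] M}.encard = (vec t).q4) := by
  induction t with
  | nil =>
    intro x
    refine ⟨?_, ?_, ?_, ?_, ?_, ?_, ?_⟩
    · simp [PM.nil, vec]
    all_goals intros; exact encard_zero (fun M => PM.nil_cons _ _ _ _)
  | cons s t ih =>
    intro x
    obtain ⟨i0, i1, i2, ip3, iq3, ip4, iq4⟩ := ih (x+1)
    cases s with
    | false =>
      refine ⟨?_, ?_, ?_, ?_, ?_, ?_, ?_⟩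
      · exact encard_zero (fun M => PM.pop_nil _ _ _)
      · intro a ha
        rw [PM.pop_card (by simpa using ha) (by simp) (by simp)]
        exact i0
      · intro a b ha hb hab
        rw [PM.pop_card (by simp; omega) (by simp; omega) (by simp)]
        exact i1 _ (by omega)
      · intro a b c ha hb hc hac hab hcb
        rw [PM.pop_card (by simp; omega) (by simp; omega) (by simp [Mono3]; omega)]
        exact i2 _ _ (by omega) (by omega) (by omega)
      · intro a b c ha hb hc hac hab hcb
        rw [PM.pop_card (by simp; omega) (by simp; omega) (by simp [Mono3]; omega)]
        exact i2 _ _ (by omega) (by omega) (by omega)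
      · intro a b c d ha hb hc hd had h1 h2 h3 h4
        rw [PM.pop_card (by simp; omega) (by simp; omega) (by simp [Mono3]; omega)]
        exact ip3 _ _ _ (by omega) (by omega) (by omega) (by omega) (by omega) (by omega)
      · intro a b c d ha hb hc hd had h1 h2 h3 h4
        rw [PM.pop_card (by simp; omega) (by simp; omega) (by simp [Mono3]; omega)]
        exact iq3 _ _ _ (by omega) (by omega) (by omega) (by omega) (by omega) (by omega)
    | true =>
      refine ⟨?_, ?_, ?_, ?_, ?_, ?_, ?_⟩
      · have : ∀ M, PM x (true :: t) [] M ↔ PM (x+1) t [x] M := by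
          intro M
          rw [PM.ins (by simp)]
          constructor
          · rintro ⟨L1, L2, h, h'⟩
            simp at h
            simpa [h] using h'
          · intro h
            exact ⟨[], [], rfl, h⟩
        simp only [this]
        exact i1 x (by omega)
      · intro a ha
        rw [vec, two_mul]
        refine encard_or (p := PM (x+1) t [x, a]) (q := PM (x+1) t [a, x]) ?_
          (i2 _ _ (by omega) (by omega) (by omega)) (i2 _ _ (by omega) (by omega) (by omega)) ?_
        · intro M
          rw [PM.ins (by simpa using ha)]
          constructor
          · rintro ⟨L1, L2, h, h'⟩
            simp only [List.cons_eq_append_iff, List.nil_eq_append_iff] at h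
            rcases h with ⟨rfl, rfl⟩ | ⟨_, rfl, rfl, rfl⟩
            · exact Or.inl h'
            · exact Or.inr h'
          · rintro (h | h)
            · exact ⟨[], [a], rfl, h⟩
            · exact ⟨[a], [], rfl, h⟩
        · intro M h1 h2
          exact h1.disj h2 (a := x) (b := a) (by simp) (by simp)
      · intro a b ha hb hab
        have key : ∀ M, PM x (true :: t) [a, b] M ↔ PM (x+1) t [x, a, b] M ∨
            PM (x+1) t [a, x, b] M ∨ PM (x+1) t [a, b, x] M := by
          intro M
          rw [PM.ins (by simp; omega)]
          constructor
          · rintro ⟨L1, L2, h, h'⟩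
            simp only [List.cons_eq_append_iff, List.nil_eq_append_iff] at h
            rcases h with ⟨rfl, rfl⟩ | ⟨_, rfl, ⟨rfl, rfl⟩ | ⟨_, rfl, rfl, rfl⟩⟩
            · exact Or.inl h'
            · exact Or.inr (Or.inl h')
            · exact Or.inr (Or.inr h')
          · rintro (h | h | h)
            · exact ⟨[], [a, b], rfl, h⟩
            · exact ⟨[a], [b], rfl, h⟩
            · exact ⟨[a, b], [], rfl, h⟩
        rw [vec]
        rcases lt_or_gt_of_ne hab with hlt | hlt
        · refine encard_or (p := PM (x+1) t [a, x, b]) (q := PM (x+1) t [x, a, b]) ?_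
            (ip3 _ _ _ (by omega) (by omega) (by omega) (by omega) (by omega) (by omega))
            (iq3 _ _ _ (by omega) (by omega) (by omega) (by omega) (by omega) (by omega)) ?_
          · intro M
            have : ¬ PM (x+1) t [a, b, x] M := fun h =>
              h.bad (by simp; omega) (List.Sublist.refl _) (by simp [Mono3]; omega)
            rw [key]; tauto
          · intro M h1 h2
            exact h1.disj h2 (a := a) (b := x) (by repeat (first | exact List.nil_sublist _ | exact List.Sublist.refl _ | apply List.Sublist.cons_cons | apply List.Sublist.cons)) (by repeat (first | exact List.nil_sublist _ | exact List.Sublist.refl _ | apply List.Sublist.cons_cons | apply List.Sublist.cons))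
        · refine encard_or (p := PM (x+1) t [a, x, b]) (q := PM (x+1) t [a, b, x]) ?_
            (ip3 _ _ _ (by omega) (by omega) (by omega) (by omega) (by omega) (by omega))
            (iq3 _ _ _ (by omega) (by omega) (by omega) (by omega) (by omega) (by omega)) ?_
          · intro M
            have : ¬ PM (x+1) t [x, a, b] M := fun h =>
              h.bad (by simp; omega) (List.Sublist.refl _) (by simp [Mono3]; omega)
            rw [key]; tauto
          · intro M h1 h2
            exact h1.disj h2 (a := x) (b := b) (by repeat (first | exact List.nil_sublist _ | exact List.Sublist.refl _ | apply List.Sublist.cons_cons | apply List.Sublist.cons)) (by repeat (first | exact List.nil_sublist _ | exact List.Sublist.refl _ | apply List.Sublist.cons_cons | apply List.Sublist.cons))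
      · intro a b c ha hb hc hac hab hcb
        refine encard_zero (fun M h => ?_)
        rw [PM.ins (by simp; omega)] at h
        obtain ⟨L1, L2, h, h'⟩ := h
        simp only [List.cons_eq_append_iff, List.nil_eq_append_iff] at h
        rcases h with ⟨rfl, rfl⟩ | ⟨_, rfl, ⟨rfl, rfl⟩ | ⟨_, rfl, ⟨rfl, rfl⟩ | ⟨_, rfl, rfl, rfl⟩⟩⟩
        · exact h'.bad (a := x) (b := b) (c := c) (by simp; omega) (by repeat (first | exact List.nil_sublist _ | exact List.Sublist.refl _ | apply List.Sublist.cons_cons | apply List.Sublist.cons)) (by simp [Mono3]; omega)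
        · exact h'.bad (a := x) (b := b) (c := c) (by simp; omega) (by repeat (first | exact List.nil_sublist _ | exact List.Sublist.refl _ | apply List.Sublist.cons_cons | apply List.Sublist.cons)) (by simp [Mono3]; omega)
        · exact h'.bad (a := a) (b := b) (c := x) (by simp; omega) (by repeat (first | exact List.nil_sublist _ | exact List.Sublist.refl _ | apply List.Sublist.cons_cons | apply List.Sublist.cons)) (by simp [Mono3]; omega)
        · exact h'.bad (a := a) (b := b) (c := x) (by simp; omega) (by repeat (first | exact List.nil_sublist _ | exact List.Sublist.refl _ | apply List.Sublist.cons_cons | apply List.Sublist.cons)) (by simp [Mono3]; omega)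
      · intro a b c ha hb hc hac hab hcb
        rw [vec]
        refine encard_or (p := PM (x+1) t [a, b, x, c]) (q := PM (x+1) t [a, x, b, c]) ?_
            (ip4 _ _ _ _ (by omega) (by omega) (by omega) (by omega) (by omega) (by omega)
              (by omega) (by omega) (by omega))
            (iq4 _ _ _ _ (by omega) (by omega) (by omega) (by omega) (by omega) (by omega)
              (by omega) (by omega) (by omega)) ?_
        · intro M
          rw [PM.ins (by simp; omega)]
          constructor
          · rintro ⟨L1, L2, h, h'⟩
            simp only [List.cons_eq_append_iff, List.nil_eq_append_iff] at h
            rcases h with ⟨rfl, rfl⟩ | ⟨_, rfl, ⟨rfl, rfl⟩ | ⟨_, rfl, ⟨rfl, rfl⟩ | ⟨_, rfl, rfl, rfl⟩⟩⟩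
            · exact (h'.bad (a := x) (b := a) (c := b) (by simp; omega) (by repeat (first | exact List.nil_sublist _ | exact List.Sublist.refl _ | apply List.Sublist.cons_cons | apply List.Sublist.cons))
                (by simp [Mono3]; omega)).elim
            · exact Or.inr h'
            · exact Or.inl h'
            · exact (h'.bad (a := b) (b := c) (c := x) (by simp; omega) (by repeat (first | exact List.nil_sublist _ | exact List.Sublist.refl _ | apply List.Sublist.cons_cons | apply List.Sublist.cons))
                (by simp [Mono3]; omega)).elim
          · rintro (h | h)
            · exact ⟨[a, b], [c], rfl, h⟩
            · exact ⟨[a], [b, c], rfl, h⟩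
        · intro M h1 h2
          exact h1.disj h2 (a := b) (b := x) (by repeat (first | exact List.nil_sublist _ | exact List.Sublist.refl _ | apply List.Sublist.cons_cons | apply List.Sublist.cons)) (by repeat (first | exact List.nil_sublist _ | exact List.Sublist.refl _ | apply List.Sublist.cons_cons | apply List.Sublist.cons))
      all_goals
        intro a b c d ha hb hc hd had h1 h2 h3 h4
        refine encard_zero (fun M h => ?_)
        rw [PM.ins (by simp; omega)] at h
        obtain ⟨L1, L2, h, h'⟩ := h
        simp only [List.cons_eq_append_iff, List.nil_eq_append_iff] at h
        rcases h with ⟨rfl, rfl⟩ | ⟨_, rfl, ⟨rfl, rfl⟩ | ⟨_, rfl, ⟨rfl, rfl⟩ |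
          ⟨_, rfl, ⟨rfl, rfl⟩ | ⟨_, rfl, rfl, rfl⟩⟩⟩⟩ <;>
        exact h'.bad5 (by simp; omega) (by simp; omega)

/-! ### linking with the frozen definitions -/

theorem avoids_321 (M : Finset (ℕ × ℕ)) : MatchAvoids p321 M ↔
    ∀ a b c a' b' c', (a, a') ∈ M → (b, b') ∈ M → (c, c') ∈ M →
    a < b → b < c → c < a' → a' < b' → b' < c' → False := by
  constructor
  · intro h a b c a' b' c' h1 h2 h3 h4 h5 h6 h7 h8
    refine h ⟨![a, b, c, a', b', c'], ?_, ?_⟩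
    · rw [Fin.strictMono_iff_lt_succ]
      intro i; fin_cases i <;> simpa
    · intro i; fin_cases i <;> simpa [p321]
  · rintro h ⟨f, hf, hm⟩
    have h1 := hm 0
    have h2 := hm 1
    have h3 := hm 2
    exact h _ _ _ _ _ _ h1 h2 h3 (hf (by decide)) (hf (by decide)) (hf (by decide))
      (hf (by decide)) (hf (by decide))

theorem avoids_123 (M : Finset (ℕ × ℕ)) : MatchAvoids p123 M ↔
    ∀ a b c a' b' c', (a, a') ∈ M → (b, b') ∈ M → (c, c') ∈ M →
    a < b → b < c → c < c' → c' < b' → b' < a' → False := by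
  constructor
  · intro h a b c a' b' c' h1 h2 h3 h4 h5 h6 h7 h8
    refine h ⟨![a, b, c, c', b', a'], ?_, ?_⟩
    · rw [Fin.strictMono_iff_lt_succ]
      intro i; fin_cases i <;> simpa
    · intro i; fin_cases i <;> simpa [p123]
  · rintro h ⟨f, hf, hm⟩
    have h1 := hm 0
    have h2 := hm 1
    have h3 := hm 2
    exact h _ _ _ _ _ _ h1 h2 h3 (hf (by decide)) (hf (by decide)) (hf (by decide))
      (hf (by decide)) (hf (by decide))

theorem PM_iff (n : ℕ) (t : List Bool) (ht : t.length = 2 * n) (M : Finset (ℕ × ℕ)) :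
    PM 1 t [] M ↔ (IsPerfectMatching n M ∧ MatchAvoids p123 M ∧
            MatchAvoids p321 M ∧ shapeOf n M = t) := by
  rw [avoids_321, avoids_123]
  constructor
  · intro h
    refine ⟨⟨?_, ?_⟩, h.ne, h.cr, ?_⟩
    · rintro ⟨a, c⟩ hp
      have := h.lt _ _ hp
      simp at this ⊢
      omega
    · intro x hx1 hx2
      have hlt : x - 1 < t.length := by omega
      have hx : 1 + (x - 1) = x := by omega
      cases hb : t[x-1] with
      | true =>
        obtain ⟨c, hc⟩ := h.opn (x-1) (by rw [List.getElem?_eq_getElem hlt, hb])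
        rw [hx] at hc
        refine ⟨(x, c), ⟨hc, Or.inl rfl⟩, ?_⟩
        rintro ⟨a, d⟩ ⟨hm, rfl | rfl⟩
        · have := h.i1 _ _ _ hc hm; simp [this]
        · exact (h.i3 _ _ _ hm hc).elim
      | false =>
        obtain ⟨c, hc⟩ := h.cls (x-1) (by rw [List.getElem?_eq_getElem hlt, hb])
        rw [hx] at hc
        refine ⟨(c, x), ⟨hc, Or.inr rfl⟩, ?_⟩
        rintro ⟨a, d⟩ ⟨hm, rfl | rfl⟩
        · exact (h.i3 _ _ _ hc hm).elim
        · have := h.i2 _ _ _ hc hm; simp [this]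
    · apply List.ext_getElem
      · simp [shapeOf, ht]
      · intro i h1 h2
        simp only [shapeOf, List.getElem_map, List.getElem_range, Finset.mem_image, Prod.exists,
          exists_and_right, exists_eq_right]
        cases hb : t[i] with
        | true =>
          obtain ⟨c, hc⟩ := h.opn i (by rw [List.getElem?_eq_getElem h2, hb])
          rw [add_comm] at hc
          simpa using ⟨c, hc⟩
        | false =>
          obtain ⟨c, hc⟩ := h.cls i (by rw [List.getElem?_eq_getElem h2, hb])
          rw [add_comm] at hc
          rw [decide_eq_false_iff_not]
          intro hmem
          obtain ⟨⟨d', d⟩, hd, hd'⟩ := Finset.mem_image.1 hmem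
          simp only [List.getElem_range] at hd'
          subst hd'
          exact h.i3 _ _ _ hc hd
  · rintro ⟨⟨h1, h2⟩, hne, hcr, rfl⟩
    have hu : ∀ x p q, p ∈ M → q ∈ M → (p.1 = x ∨ p.2 = x) → (q.1 = x ∨ q.2 = x) → p = q := by
      intro x p q hp hq hpx hqx
      have := h1 p hp
      have := h1 q hq
      exact (h2 x (by omega) (by omega)).unique ⟨hp, hpx⟩ ⟨hq, hqx⟩
    have hsh : ∀ i b, (shapeOf n M)[i]? = some b → i < 2 * n ∧
        (b = true ↔ ∃ c, (i + 1, c) ∈ M) := by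
      intro i b hi
      obtain ⟨hlt, hi⟩ := List.getElem?_eq_some_iff.1 hi
      simp only [shapeOf, List.getElem_map, List.getElem_range, Finset.mem_image, Prod.exists,
          exists_and_right, exists_eq_right] at hi
      refine ⟨by omega, ?_⟩
      rw [← hi]; simp
    refine ⟨?_, ?_, ?_, ?_, ?_, ?_, by simp, by simp, hcr, hne⟩
    · intro a c hc
      have := h1 _ hc
      simp at this ⊢
      omega
    · intro a c d hc hd
      have := hu a _ _ hc hd (Or.inl rfl) (Or.inl rfl)
      simpa using this
    · intro a b c hc hd
      have := hu c _ _ hc hd (Or.inr rfl) (Or.inr rfl)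
      simpa using this
    · intro a c d hc hd
      have h3 := hu c _ _ hc hd (Or.inr rfl) (Or.inl rfl)
      have := h1 _ hc
      simp at h3 this
      omega
    · intro i hi
      obtain ⟨_, h4⟩ := hsh i _ hi
      rw [add_comm 1 i]
      exact h4.1 rfl
    · intro i hi
      obtain ⟨h3, h4⟩ := hsh i _ hi
      obtain ⟨⟨a, c⟩, ⟨hp, h5⟩, -⟩ := h2 (i+1) (by omega) (by omega)
      rcases h5 with h5 | h5
      · simp at h5; subst h5
        exact absurd (h4.2 ⟨c, hp⟩) (by simp)
      · simp at h5; subst h5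
        exact ⟨a, by rwa [add_comm 1 i]⟩

theorem shape_encard (n : ℕ) (t : List Bool) (ht : t.length = 2 * n) :
    {M : Finset (ℕ × ℕ) | IsPerfectMatching n M ∧ MatchAvoids p123 M ∧
            MatchAvoids p321 M ∧ shapeOf n M = t}.encard = (vec t).f0 := by
  rw [← (PM.card_vec t 1).1]
  congr 1
  ext M
  exact (PM_iff n t ht M).symm

theorem shape_ncard (n : ℕ) (t : List Bool) (ht : t.length = 2 * n) :
    {M : Finset (ℕ × ℕ) | IsPerfectMatching n M ∧ MatchAvoids p123 M ∧
            MatchAvoids p321 M ∧ shapeOf n M = t}.ncard = (vec t).f0 := by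
  rw [Set.ncard_def, shape_encard n t ht]; simp

/-! ### path weights -/

def Vec7.comp (v : Vec7) : ℕ → ℕ
  | 0 => v.f0
  | 1 => v.f1
  | 2 => v.f2
  | 3 => v.p3 + v.q3
  | 4 => v.p4 + v.q4
  | _ => 0

theorem comp_true (t : List Bool) (h : ℕ) (hh : h ≤ 4) :
    (vec (true :: t)).comp h = (if h = 1 then 2 else 1) * (vec t).comp (h+1) := by
  interval_cases h <;> simp [vec, Vec7.comp]

theorem comp_false (t : List Bool) (h : ℕ) (hh : h ≤ 3) :
    (vec (false :: t)).comp (h+1) = (if h = 2 then 2 else 1) * (vec t).comp h := by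
  interval_cases h <;> simp [vec, Vec7.comp, two_mul]

theorem comp_le (t : List Bool) : ∀ h, (vec t).comp h ≠ 0 →
    ∀ i, h + (t.take i).count true - (t.take i).count false ≤ 4 := by
  induction t with
  | nil =>
    intro h hne i
    rcases h with _ | _ | _ | _ | _ | h <;> simp [vec, Vec7.comp] at hne ⊢
  | cons s t ih =>
    intro h hne i
    have hh : h ≤ 4 := by
      by_contra hc
      obtain ⟨k, rfl⟩ : ∃ k, h = k + 5 := ⟨h - 5, by omega⟩
      exact hne rfl
    rcases i with _ | i
    · simpa using hh
    cases s with
    | true =>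
      rw [comp_true _ _ hh] at hne
      have := ih (h+1) (right_ne_zero_of_mul hne) i
      simp; omega
    | false =>
      rcases h with _ | h
      · exact absurd rfl hne
      rw [comp_false _ _ (by omega)] at hne
      have := ih h (right_ne_zero_of_mul hne) i
      simp; omega

theorem comp_pow (t : List Bool) : ∀ h,
    (∀ i, (t.take i).count false ≤ h + (t.take i).count true) →
    (∀ i ≤ t.length, h + (t.take i).count true - (t.take i).count false ≤ 4) →
    h + t.count true = t.count false →
    (vec t).comp h * (if h = 2 then 2 else 1) = 2 ^ (∑ i ∈ Finset.range (t.length + 1),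
      if h + (t.take i).count true - (t.take i).count false = 2 then 1 else 0) := by
  induction t with
  | nil =>
    intro h _ _ h3
    simp at h3
    subst h3
    simp [vec, Vec7.comp]
  | cons s t ih =>
    intro h h1 h2 h3
    have hh : h ≤ 4 := by simpa using h2 0 (by simp)
    rw [List.length_cons, Finset.sum_range_succ', pow_add]
    cases s with
    | true =>
      rw [comp_true _ _ hh]
      have := ih (h+1) (fun i => by have := h1 (i+1); simp at this; omega)
        (fun i hi => by have := h2 (i+1) (by simpa using hi); simp at this; omega)
        (by simp at h3; omega)
      have e : ∀ i, h + ((true :: t).take (i+1)).count true - ((true :: t).take (i+1)).count false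
          = h + 1 + (t.take i).count true - (t.take i).count false := by
        intro i; simp; omega
      simp only [e]
      rw [← this]
      by_cases h5 : h = 1
      · subst h5; simp [mul_comm]
      · by_cases h6 : h = 2
        · subst h6; simp
        · simp [h5, h6]
    | false =>
      rcases h with _ | h
      · have := h1 1; simp at this
      rw [comp_false _ _ (by omega)]
      have := ih h (fun i => by have := h1 (i+1); simp at this; omega)
        (fun i hi => by have := h2 (i+1) (by simpa using hi); simp at this; omega)
        (by simp at h3; omega)
      have e : ∀ i, h + 1 + ((false :: t).take (i+1)).count true - ((false :: t).take (i+1)).count false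
          = h + (t.take i).count true - (t.take i).count false := by
        intro i; simp; omega
      simp only [e]
      rw [← this]
      by_cases h5 : h = 1
      · subst h5; simp
      · by_cases h6 : h = 2
        · subst h6; simp [mul_comm]
        · simp [h5, h6]

/-! ### total count -/

def blists : ℕ → Finset (List Bool)
  | 0 => {[]}
  | m + 1 => (blists m).image (List.cons true) ∪ (blists m).image (List.cons false)

theorem mem_blists (m : ℕ) : ∀ t : List Bool, t ∈ blists m ↔ t.length = m := by
  induction m with
  | zero => intro t; simp [blists]
  | succ m ih =>
    intro t
    rcases t with _ | ⟨s, t⟩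
    · simp [blists]
    · cases s <;> simp [blists, ih]

def tot (m h : ℕ) : ℕ := ∑ t ∈ blists m, (vec t).comp h

theorem tot_succ (m h : ℕ) : tot (m+1) h = ∑ t ∈ blists m, (vec (true :: t)).comp h +
    ∑ t ∈ blists m, (vec (false :: t)).comp h := by
  rw [tot, blists, Finset.sum_union, Finset.sum_image, Finset.sum_image]
  · intro a _ b _ h; simpa using h
  · intro a _ b _ h; simpa using h
  · rw [Finset.disjoint_left]
    intro t h1 h2
    simp only [Finset.mem_image] at h1 h2
    obtain ⟨a, _, rfl⟩ := h1
    obtain ⟨b, _, h⟩ := h2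
    simp at h

theorem tot_rec (m : ℕ) : tot (m+1) 0 = tot m 1 ∧ tot (m+1) 1 = 2 * tot m 2 + tot m 0 ∧
    tot (m+1) 2 = tot m 3 + tot m 1 ∧ tot (m+1) 3 = tot m 4 + 2 * tot m 2 ∧
    tot (m+1) 4 = tot m 3 := by
  refine ⟨?_, ?_, ?_, ?_, ?_⟩ <;>
    rw [tot_succ] <;> simp [tot, vec, Vec7.comp, Finset.sum_add_distrib, Finset.mul_sum, two_mul]

theorem tot_closed (n : ℕ) : 2 * tot (2 * (n+1)) 0 = 5 ^ n + 1 ∧ tot (2 * (n+1)) 2 = 5 ^ n ∧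
    2 * tot (2 * (n+1)) 4 + 1 = 5 ^ n := by
  induction n with
  | zero =>
    have h1 := tot_rec 0
    have h2 := tot_rec 1
    have e : tot 0 0 = 1 ∧ tot 0 1 = 0 ∧ tot 0 2 = 0 ∧ tot 0 3 = 0 ∧ tot 0 4 = 0 := by
      simp [tot, blists, vec, Vec7.comp]
    norm_num at h1 h2 ⊢
    omega
  | succ n ih =>
    have h1 := tot_rec (2 * (n+1))
    have h2 := tot_rec (2 * (n+1) + 1)
    have e : 2 * (n + 1 + 1) = 2 * (n+1) + 1 + 1 := by ring
    rw [e, pow_succ]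
    omega

theorem perfect_finite (n : ℕ) : {M : Finset (ℕ × ℕ) | IsPerfectMatching n M ∧
    MatchAvoids p123 M ∧ MatchAvoids p321 M}.Finite := by
  refine Set.Finite.subset (Finset.finite_toSet
    (Finset.powerset (Finset.range (2*n+1) ×ˢ Finset.range (2*n+1)))) ?_
  rintro M ⟨⟨h, -⟩, -⟩
  simp only [Finset.coe_powerset, Set.mem_preimage, Set.mem_powerset_iff, Finset.coe_subset]
  intro p hp
  have := h p hp
  simp only [Finset.mem_product, Finset.mem_range]
  omega

theorem mcount2_eq (n : ℕ) : mcount2 p123 p321 n = tot (2 * n) 0 := by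
  classical
  have hf := perfect_finite n
  rw [mcount2, Set.ncard_eq_toFinset_card _ hf,
    Finset.card_eq_sum_card_fiberwise (f := shapeOf n) (t := blists (2*n))]
  · unfold tot
    refine Finset.sum_congr rfl fun t ht => ?_
    rw [mem_blists] at ht
    rw [Vec7.comp, ← shape_ncard n t ht, ← Set.ncard_coe_finset]
    congr 1
    ext M
    simp [and_assoc]
  · intro M _
    simp [mem_blists, shapeOf]

/-- For `F ∈ F_n`: if some height `h_i ≥ 5` then `M_F(123,321) = ∅`, and
if all heights are `≤ 4` then `|M_F(123,321)| = 2^{η(F)}`. Consequently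
`|M_n(123,321)| = (5^{n−1}+1)/2` for `n ≥ 1`, and
`Σ_{n≥0}|M_n(123,321)| zⁿ = (1−5z+2z²)/(1−6z+5z²)`. -/
theorem matchings_avoiding_123_321 :
    (∀ n : ℕ, 0 < n → ∀ t : List Bool, IsDyckPath n t →
      ((∃ i, i ≤ 2 * n ∧ 5 ≤ hseq t i) →
        {M : Finset (ℕ × ℕ) | IsPerfectMatching n M ∧ MatchAvoids p123 M ∧
            MatchAvoids p321 M ∧ shapeOf n M = t}.ncard = 0) ∧
      ((∀ i, i ≤ 2 * n → hseq t i ≤ 4) →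
        {M : Finset (ℕ × ℕ) | IsPerfectMatching n M ∧ MatchAvoids p123 M ∧
            MatchAvoids p321 M ∧ shapeOf n M = t}.ncard = 2 ^ etaOf n t)) ∧
    (∀ n : ℕ, 1 ≤ n → 2 * mcount2 p123 p321 n = 5 ^ (n - 1) + 1) ∧
    (PowerSeries.mk fun n => (mcount2 p123 p321 n : ℚ)) *
        (1 - 6 * PowerSeries.X + 5 * PowerSeries.X ^ 2) =
      1 - 5 * PowerSeries.X + 2 * PowerSeries.X ^ 2 := by
  have hmain : ∀ n : ℕ, 2 * mcount2 p123 p321 (n+1) = 5 ^ n + 1 := fun n => by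
    rw [mcount2_eq]; exact (tot_closed n).1
  have h0 : mcount2 p123 p321 0 = 1 := by
    rw [mcount2_eq]; simp [tot, blists, vec, Vec7.comp]
  refine ⟨?_, ?_, ?_⟩
  · rintro n hn t ⟨ht, hc, hd⟩
    rw [shape_ncard n t ht]
    constructor
    · rintro ⟨i, hi, h5⟩
      by_contra hne
      have := comp_le t 0 hne i
      simp [hseq] at h5 this
      omega
    · intro h4
      have hcf : t.count true + t.count false = t.length := by
        simpa using List.count_true_add_count_false t
      have := comp_pow t 0 (by simpa using hd) (by simpa [hseq, ht] using h4) (by omega)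
      rw [etaOf]
      have h7 : (vec t).f0 = 2 ^ (∑ i ∈ Finset.range (2 * n + 1),
          if hseq t i = 2 then 1 else 0) := by
        rw [ht] at this
        simp only [zero_add] at this
        rw [← mul_one (vec t).f0]
        exact this
      rw [h7, Finset.card_filter]
  · intro n hn
    obtain ⟨k, rfl⟩ : ∃ k, n = k + 1 := ⟨n - 1, by omega⟩
    simpa using hmain k
  · have hq : ∀ n : ℕ, (mcount2 p123 p321 (n+1) : ℚ) = (5 ^ n + 1) / 2 := fun n => by
      have : (2 : ℚ) * mcount2 p123 p321 (n+1) = 5 ^ n + 1 := by exact_mod_cast hmain n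
      linarith
    have e : (PowerSeries.mk fun n => (mcount2 p123 p321 n : ℚ)) *
        (1 - 6 * PowerSeries.X + 5 * PowerSeries.X ^ 2) =
        (PowerSeries.mk fun n => (mcount2 p123 p321 n : ℚ)) -
        PowerSeries.C 6 * ((PowerSeries.mk fun n => (mcount2 p123 p321 n : ℚ)) * PowerSeries.X)
        + PowerSeries.C 5 * ((PowerSeries.mk fun n => (mcount2 p123 p321 n : ℚ)) *
          PowerSeries.X * PowerSeries.X) := by
      have h6 : (PowerSeries.C (6 : ℚ)) = 6 := rfl
      have h5 : (PowerSeries.C (5 : ℚ)) = 5 := rfl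
      rw [h6, h5]; ring
    have e2 : (1 - 5 * PowerSeries.X + 2 * PowerSeries.X ^ 2 : PowerSeries ℚ) =
        1 - PowerSeries.C 5 * PowerSeries.X + PowerSeries.C 2 * (PowerSeries.X * PowerSeries.X) := by
      have h2 : (PowerSeries.C (2 : ℚ)) = 2 := rfl
      have h5 : (PowerSeries.C (5 : ℚ)) = 5 := rfl
      rw [h2, h5]; ring
    rw [e, e2]
    ext n
    rcases n with _ | _ | _ | n
    · simp [h0]
    · have := hq 0
      norm_num at this
      simp [PowerSeries.coeff_succ_mul_X, PowerSeries.coeff_one, this, h0]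
      norm_num
    · have h1 := hq 0
      have h2 := hq 1
      norm_num at h1 h2
      simp [PowerSeries.coeff_succ_mul_X, PowerSeries.coeff_one, PowerSeries.coeff_X, h1, h2, h0]
      norm_num
    · simp [PowerSeries.coeff_succ_mul_X, PowerSeries.coeff_one, PowerSeries.coeff_X, hq]
      ring
end

section
/- For every positive integer n and every Ferrers board F ∈ F_n, the number of matchings of shape F avoiding both 213 and 321 equals the number of pairs (D_0, D_F) where D_0 is a Dyck path of semilength n lying weakly below D_F such that no peak of D_0 lies strictly south and strictly west of any vertex of D_F. Consequently, |M_n(213,321)| = |A²_n|, where A²_n is the set of all such pairs over all F ∈ F_n. -/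
/-- The bottom path `s` has a peak strictly south and strictly west of some vertex of the
top path `t` (both of semilength `n`). -/
def HasSWPeak (n : ℕ) (s t : List Bool) : Prop :=
  ∃ i j, s[i]? = some true ∧ s[i + 1]? = some false ∧ j ≤ 2 * n ∧
    (s.take (i + 1)).count true < (t.take j).count true ∧
    n - (s.take (i + 1)).count false < n - (t.take j).count false


def lcodeSet {n : ℕ} (π : Equiv.Perm (Fin n)) (r : Fin n) : Finset (Fin n) :=
  Finset.univ.filter fun k => r < k ∧ π k < π r

def lcode {n : ℕ} (π : Equiv.Perm (Fin n)) (r : Fin n) : ℕ := (lcodeSet π r).card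

theorem mem_lcodeSet {n : ℕ} (π : Equiv.Perm (Fin n)) (r k : Fin n) :
    k ∈ lcodeSet π r ↔ r < k ∧ π k < π r := by
  simp [lcodeSet]

theorem lcode_lt {n : ℕ} (π : Equiv.Perm (Fin n)) (r : Fin n) : lcode π r < n - r := by
  have h : lcodeSet π r ⊆ Finset.Ioi r := by
    intro k hk
    rw [mem_lcodeSet] at hk
    simpa using hk.1
  have h2 := Finset.card_le_card h
  rw [Fin.card_Ioi] at h2
  have := r.isLt
  unfold lcode
  omega

theorem lcode_aux {n : ℕ} (π ρ : Equiv.Perm (Fin n)) (r : Fin n)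
    (h : ∀ k < r, π k = ρ k) (hlt : π r < ρ r) : lcode π r < lcode ρ r := by
  classical
  have e : ∀ τ : Equiv.Perm (Fin n), lcode τ r =
      (Finset.univ.filter fun v => v < τ r ∧ ∀ k < r, τ k ≠ v).card := by
    intro τ
    unfold lcode
    apply Finset.card_bij (fun k _ => τ k)
    · intro k hk
      rw [mem_lcodeSet] at hk
      simp only [Finset.mem_filter, Finset.mem_univ, true_and]
      refine ⟨hk.2, fun j hj he => ?_⟩
      have := τ.injective he
      subst this
      exact absurd hk.1 (not_lt.2 hj.le)
    · intro a _ b _ hab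
      exact τ.injective hab
    · intro v hv
      simp only [Finset.mem_filter, Finset.mem_univ, true_and] at hv
      refine ⟨τ.symm v, ?_, by simp⟩
      rw [mem_lcodeSet]
      refine ⟨?_, by simpa using hv.1⟩
      by_contra hc
      rcases lt_or_eq_of_le (not_lt.1 hc) with h1 | h1
      · exact hv.2 _ h1 (by simp)
      · rw [← h1] at hv
        simp at hv
  rw [e, e]
  apply Finset.card_lt_card
  rw [Finset.ssubset_iff_of_subset]
  · refine ⟨π r, ?_, by simp⟩
    simp only [Finset.mem_filter, Finset.mem_univ, true_and]
    refine ⟨hlt, fun k hk he => ?_⟩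
    rw [← h k hk] at he
    exact hk.ne (π.injective he)
  · intro v hv
    simp only [Finset.mem_filter, Finset.mem_univ, true_and] at hv ⊢
    refine ⟨hv.1.trans hlt, fun k hk => ?_⟩
    rw [← h k hk]
    exact hv.2 k hk

theorem lcode_inj {n : ℕ} (π ρ : Equiv.Perm (Fin n)) (h : ∀ r, lcode π r = lcode ρ r) : π = ρ := by
  have key : ∀ m : ℕ, ∀ r : Fin n, r.val = m → π r = ρ r := by
    intro m
    induction m using Nat.strong_induction_on with
    | _ m ih =>
      intro r hr
      have hk : ∀ k < r, π k = ρ k := fun k hk => ih k.val (by omega) k rfl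
      rcases lt_trichotomy (π r) (ρ r) with h1 | h1 | h1
      · exact absurd (h r) (lcode_aux π ρ r hk h1).ne
      · exact h1
      · exact absurd (h r) (lcode_aux ρ π r (fun k hk' => (hk k hk').symm) h1).ne'
  exact Equiv.ext fun r => key r.val r rfl

theorem lcode_surj {n : ℕ} (c : Fin n → ℕ) (hc : ∀ r, c r < n - r) :
    ∃ π : Equiv.Perm (Fin n), ∀ r, lcode π r = c r := by
  classical
  let Φ : Equiv.Perm (Fin n) → (∀ r : Fin n, Fin (n - r)) := fun π r => ⟨lcode π r, lcode_lt π r⟩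
  have hinj : Function.Injective Φ := by
    intro π ρ h
    apply lcode_inj
    intro r
    have := congrFun h r
    simpa [Φ] using this
  have hcard : Fintype.card (Equiv.Perm (Fin n)) = Fintype.card (∀ r : Fin n, Fin (n - r)) := by
    rw [Fintype.card_perm, Fintype.card_pi]
    simp only [Fintype.card_fin]
    rw [Fin.prod_univ_eq_prod_range (fun i => n - i) n]
    rw [← Nat.descFactorial_eq_prod_range, Nat.descFactorial_self]
  have hb := (Fintype.bijective_iff_injective_and_card Φ).2 ⟨hinj, hcard⟩
  obtain ⟨π, hπ⟩ := hb.2 fun r => ⟨c r, hc r⟩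
  refine ⟨π, fun r => ?_⟩
  have := congrFun hπ r
  simpa [Φ] using this

/-- occurrences of one of the two patterns -/
def CorePat {n : ℕ} (X : Fin n → ℕ) (π : Equiv.Perm (Fin n)) (a b c : Fin n) : Prop :=
  a < b ∧ b < c ∧ π b < π c ∧ (π c).val < X a ∧ (π a < π b ∨ π c < π a)

theorem card_lt_perm {n : ℕ} (π : Equiv.Perm (Fin n)) (m : ℕ) (hm : m ≤ n) :
    (Finset.univ.filter fun k => (π k).val < m).card = m := by
  have : (Finset.univ.filter fun k => (π k).val < m).card =
      (Finset.univ.filter fun k : Fin n => k.val < m).card := by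
    apply Finset.card_bij (fun k _ => π k)
    · intro a ha
      simpa using ha
    · intro a _ b _ h
      exact π.injective h
    · intro b hb
      refine ⟨π.symm b, ?_, by simp⟩
      simpa using hb
  rw [this, Fin.card_filter_val_lt]
  omega

theorem core_bound {n : ℕ} (X : Fin n → ℕ) (hX : Monotone X) (hXn : ∀ r, X r ≤ n)
    (π : Equiv.Perm (Fin n)) :
    (∀ r, (π r).val < X r) ↔ ∀ r : Fin n, r.val + 1 + lcode π r ≤ X r := by
  constructor
  · intro h r
    have hd : Disjoint (Finset.Iic r) (lcodeSet π r) := by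
      rw [Finset.disjoint_left]
      intro k hk hk2
      rw [mem_lcodeSet] at hk2
      exact absurd hk2.1 (not_lt.2 (by simpa using hk))
    have hs : Finset.Iic r ∪ lcodeSet π r ⊆ Finset.univ.filter fun k => (π k).val < X r := by
      intro k hk
      rw [Finset.mem_union, mem_lcodeSet, Finset.mem_Iic] at hk
      simp only [Finset.mem_filter, Finset.mem_univ, true_and]
      rcases hk with hk | hk
      · exact (h k).trans_le (hX hk)
      · exact lt_trans hk.2 (h r)
    have := Finset.card_le_card hs
    rw [Finset.card_union_of_disjoint hd, card_lt_perm π _ (hXn r), Fin.card_Iic] at this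
    exact this
  · intro h r
    by_contra hc
    have hs : (Finset.univ.filter fun k => (π k).val < X r) ⊆ Finset.Iio r ∪ lcodeSet π r := by
      intro k hk
      simp only [Finset.mem_filter, Finset.mem_univ, true_and] at hk
      rw [Finset.mem_union, mem_lcodeSet, Finset.mem_Iio]
      have hne : π k < π r := by
        rw [Fin.lt_def]
        omega
      rcases lt_trichotomy k r with h1 | h1 | h1
      · exact Or.inl h1
      · subst h1
        exact absurd hne (lt_irrefl _)
      · exact Or.inr ⟨h1, hne⟩
    have h1 := Finset.card_le_card hs
    have h2 := Finset.card_union_le (Finset.Iio r) (lcodeSet π r)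
    rw [card_lt_perm π _ (hXn r)] at h1
    rw [Fin.card_Iio] at h2
    have := h r
    unfold lcode at this
    omega

theorem core_viol {n : ℕ} (X : Fin n → ℕ) (hXn : ∀ r, X r ≤ n)
    (π : Equiv.Perm (Fin n)) (hb : ∀ r, (π r).val < X r) (q r : Fin n) (hqr : q.val + 1 = r.val)
    (h1 : lcode π q ≠ lcode π r + 1) (h2 : r.val + 1 + lcode π r < X q) :
    ∃ k, CorePat X π q r k := by
  have hq : q < r := by rw [Fin.lt_def]; omega
  rcases lt_trichotomy (π q) (π r) with h | h | h
  · have : ¬ (Finset.univ.filter fun k => (π k).val < X q) ⊆ Finset.Iic r ∪ lcodeSet π r := by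
      intro hs
      have h3 := Finset.card_le_card hs
      have h4 := Finset.card_union_le (Finset.Iic r) (lcodeSet π r)
      rw [card_lt_perm π _ (hXn q)] at h3
      rw [Fin.card_Iic] at h4
      unfold lcode at h2
      omega
    obtain ⟨k, hk, hk2⟩ := Finset.not_subset.1 this
    simp only [Finset.mem_filter, Finset.mem_univ, true_and] at hk
    rw [Finset.mem_union, mem_lcodeSet, Finset.mem_Iic] at hk2
    push Not at hk2
    refine ⟨k, hq, hk2.1, ?_, hk, Or.inl h⟩
    refine lt_of_le_of_ne (hk2.2 hk2.1) fun he => ?_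
    exact hk2.1.ne (π.injective he)
  · exact absurd (π.injective h) hq.ne
  · have hr : r ∉ lcodeSet π r := by simp [mem_lcodeSet]
    have hs : insert r (lcodeSet π r) ⊆ lcodeSet π q := by
      intro k hk
      rw [Finset.mem_insert, mem_lcodeSet] at hk
      rw [mem_lcodeSet]
      rcases hk with rfl | hk
      · exact ⟨hq, h⟩
      · exact ⟨hq.trans hk.1, hk.2.trans h⟩
    have hns : ¬ lcodeSet π q ⊆ insert r (lcodeSet π r) := by
      intro hh
      apply h1
      unfold lcode
      rw [Finset.Subset.antisymm hh hs, Finset.card_insert_of_notMem hr]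
    obtain ⟨k, hk, hk2⟩ := Finset.not_subset.1 hns
    rw [mem_lcodeSet] at hk
    rw [Finset.mem_insert, mem_lcodeSet] at hk2
    push Not at hk2
    have hrk : r < k := by
      have h5 := hk.1
      have h6 : k.val ≠ r.val := fun he => hk2.1 (Fin.ext he)
      rw [Fin.lt_def] at h5 ⊢
      omega
    refine ⟨k, hq, hrk, ?_, lt_trans hk.2 (hb q), Or.inr hk.2⟩
    refine lt_of_le_of_ne (hk2.2 hrk) fun he => ?_
    exact hrk.ne (π.injective he)

theorem core_adj {n : ℕ} (X : Fin n → ℕ) (hX : Monotone X) (hXn : ∀ r, X r ≤ n)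
    (π : Equiv.Perm (Fin n)) (hb : ∀ r, (π r).val < X r) (q r k : Fin n)
    (hqr : q.val + 1 = r.val) (hp : CorePat X π q r k) :
    lcode π q ≠ lcode π r + 1 ∧ r.val + 1 + lcode π r < X q := by
  obtain ⟨hq, hrk, hv, hkX, hor⟩ := hp
  have hr : r ∉ lcodeSet π r := by simp [mem_lcodeSet]
  constructor
  · rcases hor with h | h
    · have hs : lcodeSet π q ⊆ lcodeSet π r := by
        intro j hj
        rw [mem_lcodeSet] at hj ⊢
        refine ⟨?_, hj.2.trans h⟩
        have h5 := hj.1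
        have h6 : j.val ≠ r.val := fun he => by
          have := Fin.ext he
          subst this
          exact absurd (hj.2.trans h) (lt_irrefl _)
        rw [Fin.lt_def] at h5 ⊢
        omega
      have := Finset.card_le_card hs
      unfold lcode
      omega
    · have hs : insert k (insert r (lcodeSet π r)) ⊆ lcodeSet π q := by
        intro j hj
        rw [Finset.mem_insert, Finset.mem_insert, mem_lcodeSet] at hj
        rw [mem_lcodeSet]
        rcases hj with rfl | rfl | hj
        · exact ⟨hq.trans hrk, h⟩
        · exact ⟨hq, hv.trans h⟩
        · exact ⟨hq.trans hj.1, hj.2.trans (hv.trans h)⟩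
      have hk : k ∉ insert r (lcodeSet π r) := by
        rw [Finset.mem_insert, mem_lcodeSet]
        push Not
        exact ⟨hrk.ne', fun _ => hv.le⟩
      have := Finset.card_le_card hs
      rw [Finset.card_insert_of_notMem hk, Finset.card_insert_of_notMem hr] at this
      unfold lcode
      omega
  · have hd : Disjoint (Finset.Iic r) (lcodeSet π r) := by
      rw [Finset.disjoint_left]
      intro j hj hj2
      rw [mem_lcodeSet] at hj2
      exact absurd hj2.1 (not_lt.2 (by simpa using hj))
    have hk : k ∉ Finset.Iic r ∪ lcodeSet π r := by
      rw [Finset.mem_union, mem_lcodeSet, Finset.mem_Iic]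
      push Not
      exact ⟨hrk, fun _ => hv.le⟩
    have hs : insert k (Finset.Iic r ∪ lcodeSet π r) ⊆
        Finset.univ.filter fun j => (π j).val < X q := by
      intro j hj
      rw [Finset.mem_insert, Finset.mem_union, mem_lcodeSet, Finset.mem_Iic] at hj
      simp only [Finset.mem_filter, Finset.mem_univ, true_and]
      rcases hj with rfl | hj | hj
      · exact hkX
      · rcases lt_or_eq_of_le hj with h | h
        · have : j ≤ q := by rw [Fin.lt_def] at h; rw [Fin.le_def]; omega
          exact (hb j).trans_le (hX this)
        · subst h
          exact lt_trans hv hkX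
      · exact lt_trans (hj.2.trans hv) hkX
    have := Finset.card_le_card hs
    rw [Finset.card_insert_of_notMem hk, Finset.card_union_of_disjoint hd,
      card_lt_perm π _ (hXn q), Fin.card_Iic] at this
    unfold lcode
    omega

theorem core_pat_adj {n : ℕ} (X : Fin n → ℕ) (hX : Monotone X) (π : Equiv.Perm (Fin n)) :
    ∀ d : ℕ, ∀ a b c : Fin n, b.val = a.val + 1 + d → CorePat X π a b c →
      ∃ q r k : Fin n, q.val + 1 = r.val ∧ CorePat X π q r k := by
  intro d
  induction d with
  | zero =>
    intro a b c h hp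
    exact ⟨a, b, c, by omega, hp⟩
  | succ d ih =>
    intro a b c h hp
    obtain ⟨hab, hbc, hv, hcX, hor⟩ := hp
    have hbl := b.isLt
    let e : Fin n := ⟨a.val + 1, by omega⟩
    have hae : a < e := by rw [Fin.lt_def]; simp [e]
    have heb : e < b := by rw [Fin.lt_def]; simp [e]; omega
    have hec : e < c := heb.trans hbc
    have n1 : π e ≠ π b := fun h => heb.ne (π.injective h)
    have n2 : π e ≠ π c := fun h => hec.ne (π.injective h)
    by_cases h1 : π e < π b
    · exact ih e b c (by simp [e]; omega) ⟨heb, hbc, hv, hcX.trans_le (hX hae.le), Or.inl h1⟩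
    · by_cases h2 : π c < π e
      · exact ih e b c (by simp [e]; omega) ⟨heb, hbc, hv, hcX.trans_le (hX hae.le), Or.inr h2⟩
      · have h1' : π b < π e := lt_of_le_of_ne (not_lt.1 h1) n1.symm
        have h2' : π e < π c := lt_of_le_of_ne (not_lt.1 h2) n2
        refine ⟨a, e, c, by simp [e], hae, hec, h2', hcX, ?_⟩
        rcases hor with h3 | h3
        · exact Or.inl (h3.trans h1')
        · exact Or.inr h3

theorem core_count {n : ℕ} (X : Fin n → ℕ) (hX : Monotone X) (hXn : ∀ r, X r ≤ n) :
    {π : Equiv.Perm (Fin n) | (∀ r, (π r).val < X r) ∧ ∀ a b c, ¬ CorePat X π a b c}.ncard =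
    {x : Fin n → ℕ | (∀ r : Fin n, r.val + 1 ≤ x r ∧ x r ≤ X r) ∧
      ∀ q r : Fin n, q.val + 1 = r.val → x r = x q ∨ X q ≤ x r}.ncard := by
  apply Set.ncard_congr (fun π _ r => r.val + 1 + lcode π r)
  · rintro π ⟨hb, hp⟩
    refine ⟨fun r => ⟨Nat.le_add_right _ _, (core_bound X hX hXn π).1 hb r⟩, fun q r hqr => ?_⟩
    by_contra hc
    push Not at hc
    obtain ⟨k, hk⟩ := core_viol X hXn π hb q r hqr (by omega) hc.2
    exact hp _ _ _ hk
  · intro π ρ _ _ h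
    apply lcode_inj
    intro r
    have : r.val + 1 + lcode π r = r.val + 1 + lcode ρ r := congrFun h r
    omega
  · rintro x ⟨hx, hx2⟩
    obtain ⟨π, hπ⟩ := lcode_surj (fun r => x r - (r.val + 1)) (by
      intro r
      have := hx r
      have := hXn r
      have := r.isLt
      omega)
    have e : ∀ r : Fin n, r.val + 1 + lcode π r = x r := by
      intro r
      rw [hπ]
      have := hx r
      omega
    have hb : ∀ r, (π r).val < X r := by
      rw [core_bound X hX hXn]
      intro r
      rw [e]
      exact (hx r).2
    refine ⟨π, ⟨hb, fun a b c hp => ?_⟩, funext e⟩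
    have hab : a.val < b.val := hp.1
    obtain ⟨q, r, k, hqr, hp2⟩ := core_pat_adj X hX π (b.val - a.val - 1) a b c (by omega) hp
    have h3 := core_adj X hX hXn π hb q r k hqr hp2
    have h4 := hx2 q r hqr
    have := e q
    have := e r
    omega

structure PRepr (b : Bool) (n : ℕ) (s : List Bool) (f : Fin n → ℕ) : Prop where
  len : s.length = 2 * n
  mono : StrictMono f
  mem : ∀ r, s[f r]? = some b
  surj : ∀ p, s[p]? = some b → ∃ r, f r = p

theorem count_take_eq (s : List Bool) (b : Bool) (p : ℕ) :
    (s.take p).count b = ((Finset.range p).filter fun i => s[i]? = some b).card := by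
  induction p with
  | zero => simp
  | succ p ih =>
    rw [List.take_add_one, List.count_append, ih, Finset.range_add_one, Finset.filter_insert]
    cases h : s[p]? with
    | none => simp
    | some c =>
      by_cases hc : c = b
      · subst hc
        simp
      · simp [hc]

theorem PRepr.lt {b : Bool} {n : ℕ} {s : List Bool} {f : Fin n → ℕ} (h : PRepr b n s f)
    (r : Fin n) : f r < 2 * n := by
  have := h.mem r
  rw [← h.len]
  exact (List.getElem?_eq_some_iff.1 this).1

theorem PRepr.count_eq {b : Bool} {n : ℕ} {s : List Bool} {f : Fin n → ℕ} (h : PRepr b n s f)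
    (p : ℕ) : (s.take p).count b = (Finset.univ.filter fun r => f r < p).card := by
  rw [count_take_eq]
  symm
  apply Finset.card_bij (fun r _ => f r)
  · intro r hr
    simp only [Finset.mem_filter, Finset.mem_univ, true_and] at hr
    simp [hr, h.mem r]
  · intro a _ c _ hac
    exact h.mono.injective hac
  · intro i hi
    simp only [Finset.mem_filter, Finset.mem_range] at hi
    obtain ⟨r, hr⟩ := h.surj i hi.2
    exact ⟨r, by simp [hr, hi.1], hr⟩

theorem PRepr.iff {b : Bool} {n : ℕ} {s : List Bool} {f : Fin n → ℕ} (h : PRepr b n s f)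
    (p : ℕ) (r : Fin n) : r.val < (s.take p).count b ↔ f r < p := by
  rw [h.count_eq]
  constructor
  · intro hr
    by_contra hc
    have hs : (Finset.univ.filter fun r => f r < p) ⊆ Finset.Iio r := by
      intro k hk
      simp only [Finset.mem_filter, Finset.mem_univ, true_and] at hk
      rw [Finset.mem_Iio]
      exact h.mono.lt_iff_lt.1 (by omega)
    have := Finset.card_le_card hs
    rw [Fin.card_Iio] at this
    omega
  · intro hr
    have hs : Finset.Iic r ⊆ (Finset.univ.filter fun r => f r < p) := by
      intro k hk
      rw [Finset.mem_Iic] at hk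
      simp only [Finset.mem_filter, Finset.mem_univ, true_and]
      exact lt_of_le_of_lt (h.mono.monotone hk) hr
    have := Finset.card_le_card hs
    rw [Fin.card_Iic] at this
    omega

theorem PRepr.count_le {b : Bool} {n : ℕ} {s : List Bool} {f : Fin n → ℕ} (h : PRepr b n s f)
    (p : ℕ) : (s.take p).count b ≤ n := by
  rw [h.count_eq]
  exact (Finset.card_le_univ _).trans (by simp)

theorem PRepr.count_self {b : Bool} {n : ℕ} {s : List Bool} {f : Fin n → ℕ} (h : PRepr b n s f)
    (r : Fin n) : (s.take (f r)).count b = r.val := by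
  rw [h.count_eq]
  have : (Finset.univ.filter fun k => f k < f r) = Finset.Iio r := by
    ext k
    simp [h.mono.lt_iff_lt]
  rw [this, Fin.card_Iio]

theorem PRepr.unique {b : Bool} {n : ℕ} {s : List Bool} {f g : Fin n → ℕ} (h : PRepr b n s f)
    (h' : PRepr b n s g) : f = g := by
  funext r
  obtain ⟨k, hk⟩ := h'.surj _ (h.mem r)
  have h1 := h.count_self r
  have h2 := h'.count_self k
  rw [hk, h1] at h2
  rw [← hk, Fin.ext h2]

theorem count_tf (s : List Bool) (p : ℕ) :
    (s.take p).count true + (s.take p).count false = min p s.length := by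
  rw [List.count_true_add_count_false, List.length_take]

theorem exists_prepr (b : Bool) (n : ℕ) (s : List Bool) (hl : s.length = 2 * n)
    (hc : s.count b = n) : ∃ f : Fin n → ℕ, PRepr b n s f := by
  have h1 : ((Finset.range (2 * n)).filter fun i => s[i]? = some b).card = n := by
    rw [← count_take_eq, ← hl, List.take_length, hc]
  refine ⟨Finset.orderEmbOfFin _ h1, hl, OrderEmbedding.strictMono _, ?_, ?_⟩
  · intro r
    have := Finset.orderEmbOfFin_mem _ h1 r
    exact (Finset.mem_filter.1 this).2
  · intro p hp
    have hmem : p ∈ ((Finset.range (2 * n)).filter fun i => s[i]? = some b) := by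
      rw [Finset.mem_filter, Finset.mem_range, ← hl]
      exact ⟨(List.getElem?_eq_some_iff.1 hp).1, hp⟩
    have hr := Finset.range_orderEmbOfFin _ h1
    have : p ∈ Set.range (Finset.orderEmbOfFin _ h1) := by
      rw [hr]
      exact hmem
    exact this

theorem PRepr.count_all {b : Bool} {n : ℕ} {s : List Bool} {f : Fin n → ℕ} (h : PRepr b n s f) :
    s.count b = n := by
  have := h.count_eq (2 * n)
  rw [← h.len, List.take_length, h.len] at this
  rw [this, Finset.filter_true_of_mem fun r _ => h.lt r]
  simp

theorem PRepr.dyck_iff {n : ℕ} {s : List Bool} {f : Fin n → ℕ} (h : PRepr false n s f) :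
    IsDyckPath n s ↔ ∀ r : Fin n, 2 * r.val + 1 ≤ f r := by
  have hl := h.len
  have ha := h.count_all
  constructor
  · rintro ⟨_, _, h3⟩ r
    have h4 := h3 (f r + 1)
    have h5 := (h.iff (f r + 1) r).2 (by omega)
    have h6 := count_tf s (f r + 1)
    omega
  · intro h1
    refine ⟨h.len, ?_, fun i => ?_⟩
    · have := List.count_true_add_count_false s
      omega
    · by_contra hc
      have h6 := count_tf s i
      have h7 := h.count_le i
      have hlt : (s.take i).count false - 1 < n := by omega
      have h8 := (h.iff i ⟨_, hlt⟩).1 (by simp only; omega)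
      have h9 := h1 ⟨_, hlt⟩
      have h10 := h.lt ⟨_, hlt⟩
      simp only at h9
      omega

theorem PRepr.below_iff {n : ℕ} {s t : List Bool} {f F : Fin n → ℕ} (h : PRepr false n s f)
    (H : PRepr false n t F) : WeaklyBelow s t ↔ ∀ r, f r ≤ F r := by
  have hl := h.len
  have Hl := H.len
  unfold WeaklyBelow pathHeight
  constructor
  · intro h1 r
    have h2 := h1 (F r + 1)
    have h3 := count_tf s (F r + 1)
    have h4 := count_tf t (F r + 1)
    have h5 := (H.iff (F r + 1) r).2 (by omega)
    have h6 := (h.iff (F r + 1) r).1 (by omega)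
    omega
  · intro h1 i
    have h3 := count_tf s i
    have h4 := count_tf t i
    by_contra hc
    have h7 := H.count_le i
    have hlt : (t.take i).count false - 1 < n := by omega
    have h5 := (H.iff i ⟨_, hlt⟩).1 (by simp only; omega)
    have h6 := (h.iff i ⟨_, hlt⟩).2 (by have := h1 ⟨_, hlt⟩; omega)
    simp only at h6
    omega

theorem PRepr.peak_iff {n : ℕ} {s t : List Bool} {f F : Fin n → ℕ} (h : PRepr false n s f)
    (H : PRepr false n t F) : HasSWPeak n s t ↔
      ∃ q r : Fin n, q.val + 1 = r.val ∧ f q + 1 < f r ∧ f r ≤ F q := by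
  have hl := h.len
  have Hl := H.len
  constructor
  · rintro ⟨i, j, h1, h2, hj, h3, h4⟩
    obtain ⟨r, hr⟩ := h.surj _ h2
    have c1 := h.count_self r
    rw [hr] at c1
    have c2 := count_tf s (i + 1)
    have c3 := h.lt r
    have hrn := r.isLt
    have hlt : r.val - 1 < n := by omega
    have hjq : ¬ F ⟨_, hlt⟩ < j := by
      rw [← H.iff]
      simp only
      omega
    have c4 := H.count_self ⟨_, hlt⟩
    have c5 := count_tf t (F ⟨_, hlt⟩)
    have c6 := H.lt ⟨_, hlt⟩
    have c7 : (t.take j).count true ≤ (t.take (F ⟨_, hlt⟩)).count true :=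
      (List.take_sublist_take_left (by omega)).count_le true
    simp only at c4
    have c8 : f ⟨_, hlt⟩ < f r := h.mono (by rw [Fin.lt_def]; simp only; omega)
    have c9 : f ⟨_, hlt⟩ ≠ i := by
      intro he
      have := h.mem ⟨_, hlt⟩
      rw [he, h1] at this
      simp at this
    exact ⟨⟨_, hlt⟩, r, by simp only; omega, by omega, by omega⟩
  · rintro ⟨q, r, hqr, h1, h2⟩
    have c3 := h.lt r
    have c6 := H.lt q
    have c1 := h.count_self r
    have c4 := H.count_self q
    have c2 := count_tf s (f r)
    have c5 := count_tf t (F q)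
    have hi : f r - 1 + 1 = f r := by omega
    have hrn := r.isLt
    refine ⟨f r - 1, F q, ?_, ?_, by omega, ?_, ?_⟩
    · have hlen : f r - 1 < s.length := by omega
      rw [List.getElem?_eq_getElem hlen]
      cases hb : s[f r - 1] with
      | true => rfl
      | false =>
        exfalso
        obtain ⟨k, hk⟩ := h.surj (f r - 1) (by rw [List.getElem?_eq_getElem hlen, hb])
        have k1 : q < k := h.mono.lt_iff_lt.1 (by omega)
        have k2 : k < r := h.mono.lt_iff_lt.1 (by omega)
        rw [Fin.lt_def] at k1 k2
        omega
    · rw [hi]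
      exact h.mem r
    · rw [hi]
      omega
    · rw [hi]
      omega

theorem strictMono_gap {n : ℕ} {F : Fin n → ℕ} (h : StrictMono F) :
    (∀ r : Fin n, r.val ≤ F r) ∧ Monotone fun r => F r - r.val := by
  have key : ∀ d : ℕ, ∀ a b : Fin n, b.val = a.val + d → F a + d ≤ F b := by
    intro d
    induction d with
    | zero =>
      intro a b hab
      have : b = a := Fin.ext (by omega)
      subst this
      omega
    | succ d ih =>
      intro a b hab
      have := b.isLt
      have h1 := ih a ⟨a.val + d, by omega⟩ rfl
      have h2 : F ⟨a.val + d, by omega⟩ < F b := h (by rw [Fin.lt_def]; simp only; omega)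
      omega
  have h0 : ∀ r : Fin n, r.val ≤ F r := by
    intro r
    have := r.isLt
    have := key r.val ⟨0, by omega⟩ r (by simp)
    omega
  refine ⟨h0, fun a b hab => ?_⟩
  have h1 := key (b.val - a.val) a b (by rw [Fin.le_def] at hab; omega)
  have := h0 a
  have := h0 b
  rw [Fin.le_def] at hab
  show F a - a.val ≤ F b - b.val
  omega

theorem path_count {n : ℕ} {t : List Bool} {F : Fin n → ℕ} (H : PRepr false n t F) :
    {s : List Bool | IsDyckPath n s ∧ WeaklyBelow s t ∧ ¬ HasSWPeak n s t}.ncard =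
    {x : Fin n → ℕ | (∀ r : Fin n, r.val + 1 ≤ x r ∧ x r ≤ F r - r.val) ∧
      ∀ q r : Fin n, q.val + 1 = r.val → x r = x q ∨ F q - q.val ≤ x r}.ncard := by
  classical
  have hFg := (strictMono_gap H.mono).1
  have hrep : ∀ x : Fin n → ℕ, ((∀ r : Fin n, r.val + 1 ≤ x r ∧ x r ≤ F r - r.val) ∧
      ∀ q r : Fin n, q.val + 1 = r.val → x r = x q ∨ F q - q.val ≤ x r) →
      PRepr false n ((List.range (2 * n)).map
        fun p => decide (¬ ∃ r : Fin n, r.val + x r = p)) (fun r => r.val + x r) := by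
    rintro x ⟨hx1, hx2⟩
    have hmono : StrictMono fun r : Fin n => r.val + x r := by
      have hm : ∀ d : ℕ, ∀ a b : Fin n, b.val = a.val + d → x a ≤ x b := by
        intro d
        induction d with
        | zero =>
          intro a b hab
          have : b = a := Fin.ext (by omega)
          subst this
          exact le_rfl
        | succ d ih =>
          intro a b hab
          have := b.isLt
          have h1 := ih a ⟨a.val + d, by omega⟩ rfl
          have h2 := hx2 ⟨a.val + d, by omega⟩ b (by simp only; omega)
          have h3 := hx1 ⟨a.val + d, by omega⟩
          simp only at h2 h3
          omega
      intro a b hab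
      rw [Fin.lt_def] at hab
      have := hm (b.val - a.val) a b (by omega)
      simp only
      omega
    have hlt : ∀ r : Fin n, r.val + x r < 2 * n := by
      intro r
      have := hx1 r
      have := H.lt r
      have := hFg r
      omega
    refine ⟨by simp, hmono, ?_, ?_⟩
    · intro r
      rw [List.getElem?_map, List.getElem?_range (hlt r)]
      simp only [Option.map_some, Option.some.injEq, decide_eq_false_iff_not, not_not]
      exact ⟨r, rfl⟩
    · intro p hp
      rw [List.getElem?_map] at hp
      by_cases hpn : p < 2 * n
      · rw [List.getElem?_range hpn] at hp
        simpa using hp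
      · rw [List.getElem?_eq_none (by simpa using hpn)] at hp
        simp at hp
  symm
  apply Set.ncard_congr (fun x _ => (List.range (2 * n)).map
    fun p => decide (¬ ∃ r : Fin n, r.val + x r = p))
  · rintro x ⟨hx1, hx2⟩
    have h := hrep x ⟨hx1, hx2⟩
    refine ⟨h.dyck_iff.2 ?_, (h.below_iff H).2 ?_, fun hp => ?_⟩
    · intro r
      have := hx1 r
      omega
    · intro r
      have := hx1 r
      have := hFg r
      omega
    · obtain ⟨q, r, hqr, h1, h2⟩ := (h.peak_iff H).1 hp
      have := hx2 q r hqr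
      have := hFg q
      omega
  · intro x y hx hy hxy
    have h1 := hrep x hx
    have h2 := hrep y hy
    rw [hxy] at h1
    funext r
    have := congrFun (h1.unique h2) r
    omega
  · rintro s ⟨h1, h2, h3⟩
    obtain ⟨f, h⟩ := exists_prepr false n s h1.1 (by
      have := List.count_true_add_count_false s
      have := h1.1
      have := h1.2.1
      omega)
    rw [h.dyck_iff] at h1
    rw [h.below_iff H] at h2
    rw [h.peak_iff H] at h3
    refine ⟨fun r => f r - r.val, ⟨?_, ?_⟩, ?_⟩
    · intro r
      have := h1 r
      have := h2 r
      simp only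
      omega
    · intro q r hqr
      have := h1 r
      have := h1 q
      have := h2 q
      have : f q < f r := h.mono (by rw [Fin.lt_def]; omega)
      simp only
      by_contra hc
      apply h3
      exact ⟨q, r, hqr, by omega, by omega⟩
    · have e : ∀ r : Fin n, r.val + (f r - r.val) = f r := by
        intro r
        have := h1 r
        omega
      simp only [e]
      apply List.ext_getElem
      · simp [h.len]
      · intro i hi1 hi2
        simp only [List.getElem_map, List.getElem_range]
        cases hb : s[i] with
        | true =>
          simp only [decide_eq_true_eq]
          rintro ⟨r, hr⟩
          have := h.mem r
          rw [hr, List.getElem?_eq_getElem hi2, hb] at this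
          simp at this
        | false =>
          simp only [decide_eq_false_iff_not, not_not]
          exact h.surj i (by rw [List.getElem?_eq_getElem hi2, hb])

theorem contains_p213 (M : Finset (ℕ × ℕ)) : MatchContains p213 M ↔
    ∃ a b c d e g : ℕ, a < b ∧ b < c ∧ c < d ∧ d < e ∧ e < g ∧
      (a, e) ∈ M ∧ (b, g) ∈ M ∧ (c, d) ∈ M := by
  constructor
  · rintro ⟨f, hf, h⟩
    refine ⟨f 0, f 1, f 2, f 3, f 4, f 5, hf (by decide), hf (by decide), hf (by decide),
      hf (by decide), hf (by decide), h 0, h 1, h 2⟩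
  · rintro ⟨a, b, c, d, e, g, h1, h2, h3, h4, h5, m1, m2, m3⟩
    refine ⟨![a, b, c, d, e, g], ?_, ?_⟩
    · rw [Fin.strictMono_iff_lt_succ]
      intro i
      fin_cases i
      · exact h1
      · exact h2
      · exact h3
      · exact h4
      · exact h5
    · intro i
      fin_cases i
      · exact m1
      · exact m2
      · exact m3

theorem contains_p321 (M : Finset (ℕ × ℕ)) : MatchContains p321 M ↔
    ∃ a b c d e g : ℕ, a < b ∧ b < c ∧ c < d ∧ d < e ∧ e < g ∧
      (a, d) ∈ M ∧ (b, e) ∈ M ∧ (c, g) ∈ M := by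
  constructor
  · rintro ⟨f, hf, h⟩
    refine ⟨f 0, f 1, f 2, f 3, f 4, f 5, hf (by decide), hf (by decide), hf (by decide),
      hf (by decide), hf (by decide), h 0, h 1, h 2⟩
  · rintro ⟨a, b, c, d, e, g, h1, h2, h3, h4, h5, m1, m2, m3⟩
    refine ⟨![a, b, c, d, e, g], ?_, ?_⟩
    · rw [Fin.strictMono_iff_lt_succ]
      intro i
      fin_cases i
      · exact h1
      · exact h2
      · exact h3
      · exact h4
      · exact h5
    · intro i
      fin_cases i
      · exact m1
      · exact m2
      · exact m3

def permMatch {n : ℕ} (E F : Fin n → ℕ) (π : Equiv.Perm (Fin n)) : Finset (ℕ × ℕ) :=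
  Finset.univ.image fun r => (E (π r) + 1, F r + 1)

theorem mem_permMatch {n : ℕ} (E F : Fin n → ℕ) (π : Equiv.Perm (Fin n)) (a b : ℕ) :
    (a, b) ∈ permMatch E F π ↔ ∃ r, E (π r) + 1 = a ∧ F r + 1 = b := by
  simp [permMatch]

theorem opener_lt_iff {n : ℕ} {t : List Bool} {E F : Fin n → ℕ} (hE : PRepr true n t E)
    (hF : PRepr false n t F) (k r : Fin n) : E k < F r ↔ k.val < F r - r.val := by
  rw [← hE.iff]
  have h1 := hF.count_self r
  have h2 := count_tf t (F r)
  have h3 := hF.len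
  have h4 := hF.lt r
  have : (t.take (F r)).count true = F r - r.val := by omega
  rw [this]

theorem prepr_ne {n : ℕ} {t : List Bool} {E F : Fin n → ℕ} (hE : PRepr true n t E)
    (hF : PRepr false n t F) (k r : Fin n) : E k ≠ F r := by
  intro h
  have h1 := hE.mem k
  rw [h, hF.mem r] at h1
  simp at h1

theorem permMatch_avoid {n : ℕ} {t : List Bool} {E F : Fin n → ℕ} (hE : PRepr true n t E)
    (hF : PRepr false n t F) (π : Equiv.Perm (Fin n)) (hb : ∀ r, (π r).val < F r - r.val) :
    (MatchAvoids p213 (permMatch E F π) ∧ MatchAvoids p321 (permMatch E F π)) ↔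
      ∀ a b c, ¬ CorePat (fun r => F r - r.val) π a b c := by
  unfold MatchAvoids
  rw [contains_p213, contains_p321]
  constructor
  · rintro ⟨h1, h2⟩ a b c ⟨hab, hbc, hv, hX, hor⟩
    have f1 := hF.mono hab
    have f2 := hF.mono hbc
    have e1 := hE.mono hv
    have e2 := (opener_lt_iff hE hF _ _).2 hX
    rcases hor with h | h
    · apply h2
      have e3 := hE.mono h
      exact ⟨_, _, _, _, _, _, by omega, by omega, by omega, by omega, by omega,
        (mem_permMatch E F π _ _).2 ⟨a, rfl, rfl⟩, (mem_permMatch E F π _ _).2 ⟨b, rfl, rfl⟩,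
        (mem_permMatch E F π _ _).2 ⟨c, rfl, rfl⟩⟩
    · apply h1
      have e3 := hE.mono h
      have e4 := (opener_lt_iff hE hF _ _).2 (hb a)
      exact ⟨E (π b) + 1, E (π c) + 1, E (π a) + 1, F a + 1, F b + 1, F c + 1,
        by omega, by omega, by omega, by omega, by omega,
        (mem_permMatch E F π _ _).2 ⟨b, rfl, rfl⟩, (mem_permMatch E F π _ _).2 ⟨c, rfl, rfl⟩,
        (mem_permMatch E F π _ _).2 ⟨a, rfl, rfl⟩⟩
  · intro hp
    constructor
    · rintro ⟨a, b, c, d, e, g, h1, h2, h3, h4, h5, m1, m2, m3⟩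
      obtain ⟨r2, a2, b2⟩ := (mem_permMatch E F π _ _).1 m1
      obtain ⟨r3, a3, b3⟩ := (mem_permMatch E F π _ _).1 m2
      obtain ⟨r1, a1, b1⟩ := (mem_permMatch E F π _ _).1 m3
      exact hp r1 r2 r3 ⟨hF.mono.lt_iff_lt.1 (by omega), hF.mono.lt_iff_lt.1 (by omega),
        hE.mono.lt_iff_lt.1 (by omega), (opener_lt_iff hE hF _ _).1 (by omega),
        Or.inr (hE.mono.lt_iff_lt.1 (by omega))⟩
    · rintro ⟨a, b, c, d, e, g, h1, h2, h3, h4, h5, m1, m2, m3⟩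
      obtain ⟨r1, a1, b1⟩ := (mem_permMatch E F π _ _).1 m1
      obtain ⟨r2, a2, b2⟩ := (mem_permMatch E F π _ _).1 m2
      obtain ⟨r3, a3, b3⟩ := (mem_permMatch E F π _ _).1 m3
      exact hp r1 r2 r3 ⟨hF.mono.lt_iff_lt.1 (by omega), hF.mono.lt_iff_lt.1 (by omega),
        hE.mono.lt_iff_lt.1 (by omega), (opener_lt_iff hE hF _ _).1 (by omega),
        Or.inl (hE.mono.lt_iff_lt.1 (by omega))⟩

theorem prepr_cover {n : ℕ} {t : List Bool} {E F : Fin n → ℕ} (hE : PRepr true n t E)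
    (hF : PRepr false n t F) (p : ℕ) (hp : p < 2 * n) : (∃ k, E k = p) ∨ ∃ r, F r = p := by
  have hl : p < t.length := by rw [hE.len]; exact hp
  cases hb : t[p] with
  | true => exact Or.inl (hE.surj p (by rw [List.getElem?_eq_getElem hl, hb]))
  | false => exact Or.inr (hF.surj p (by rw [List.getElem?_eq_getElem hl, hb]))

theorem permMatch_perfect {n : ℕ} {t : List Bool} {E F : Fin n → ℕ} (hE : PRepr true n t E)
    (hF : PRepr false n t F) (π : Equiv.Perm (Fin n)) (hb : ∀ r, (π r).val < F r - r.val) :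
    IsPerfectMatching n (permMatch E F π) := by
  constructor
  · rintro ⟨a, b⟩ hp
    obtain ⟨r, rfl, rfl⟩ := (mem_permMatch E F π _ _).1 hp
    have := (opener_lt_iff hE hF _ _).2 (hb r)
    have := hF.lt r
    refine ⟨?_, ?_, ?_⟩ <;> simp only <;> omega
  · intro x hx1 hx2
    rcases prepr_cover hE hF (x - 1) (by omega) with ⟨k, hk⟩ | ⟨r, hr⟩
    · refine ⟨(E (π (π.symm k)) + 1, F (π.symm k) + 1),
        ⟨(mem_permMatch E F π _ _).2 ⟨_, rfl, rfl⟩, Or.inl ?_⟩, ?_⟩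
      · simp only [Equiv.apply_symm_apply]
        omega
      · rintro ⟨a, b⟩ ⟨hp, hor⟩
        obtain ⟨r, rfl, rfl⟩ := (mem_permMatch E F π _ _).1 hp
        rcases hor with h | h
        · simp only at h
          have : E (π r) = E k := by omega
          have := hE.mono.injective this
          rw [← this]
          simp
        · simp only at h
          exact absurd (show E k = F r by omega) (prepr_ne hE hF k r)
    · refine ⟨(E (π r) + 1, F r + 1),
        ⟨(mem_permMatch E F π _ _).2 ⟨_, rfl, rfl⟩, Or.inr ?_⟩, ?_⟩
      · simp only
        omega
      · rintro ⟨a, b⟩ ⟨hp, hor⟩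
        obtain ⟨r', rfl, rfl⟩ := (mem_permMatch E F π _ _).1 hp
        rcases hor with h | h
        · simp only at h
          exact absurd (show E (π r') = F r by omega) (prepr_ne hE hF _ r)
        · simp only at h
          have : F r' = F r := by omega
          rw [hF.mono.injective this]

theorem permMatch_shape {n : ℕ} {t : List Bool} {E F : Fin n → ℕ} (hE : PRepr true n t E)
    (hF : PRepr false n t F) (π : Equiv.Perm (Fin n)) :
    shapeOf n (permMatch E F π) = t := by
  unfold shapeOf
  apply List.ext_getElem
  · simp [hE.len]
  · intro i hi1 hi2
    simp only [List.getElem_map, List.getElem_range]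
    have hi : i < 2 * n := by rw [← hE.len]; exact hi2
    rcases prepr_cover hE hF i hi with ⟨k, hk⟩ | ⟨r, hr⟩
    · have h1 := hE.mem k
      rw [hk, List.getElem?_eq_getElem hi2] at h1
      rw [Option.some.inj h1, decide_eq_true_eq, Finset.mem_image]
      exact ⟨(E (π (π.symm k)) + 1, F (π.symm k) + 1),
        (mem_permMatch E F π _ _).2 ⟨_, rfl, rfl⟩, by simp [hk]⟩
    · have h1 := hF.mem r
      rw [hr, List.getElem?_eq_getElem hi2] at h1
      rw [Option.some.inj h1, decide_eq_false_iff_not, Finset.mem_image]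
      rintro ⟨⟨a, b⟩, hp, he⟩
      obtain ⟨r', rfl, rfl⟩ := (mem_permMatch E F π _ _).1 hp
      simp only at he
      exact absurd (show E (π r') = F r by omega) (prepr_ne hE hF _ r)

theorem permMatch_surj {n : ℕ} {t : List Bool} {E F : Fin n → ℕ} (hE : PRepr true n t E)
    (hF : PRepr false n t F) (M : Finset (ℕ × ℕ)) (hM : IsPerfectMatching n M)
    (hs : shapeOf n M = t) :
    ∃ π : Equiv.Perm (Fin n), (∀ r, (π r).val < F r - r.val) ∧ permMatch E F π = M := by
  obtain ⟨hM1, hM2⟩ := hM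
  have hsh : ∀ i < 2 * n, t[i]? = some (decide ((i + 1) ∈ M.image Prod.fst)) := by
    intro i hi
    rw [← hs]
    unfold shapeOf
    rw [List.getElem?_map, List.getElem?_range hi]
    rfl
  have huniq : ∀ p ∈ M, ∀ q ∈ M, ∀ x, (p.1 = x ∨ p.2 = x) → (q.1 = x ∨ q.2 = x) → p = q := by
    intro p hp q hq x h1 h2
    have a1 := hM1 p hp
    obtain ⟨z, _, hz⟩ := hM2 x (by omega) (by omega)
    rw [hz p ⟨hp, h1⟩, hz q ⟨hq, h2⟩]
  have hex : ∀ r, ∃ k, (E k + 1, F r + 1) ∈ M := by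
    intro r
    have hr := hF.lt r
    obtain ⟨p, ⟨hp, hor⟩, _⟩ := hM2 (F r + 1) (by omega) (by omega)
    have hr1 := hsh (F r) hr
    rw [hF.mem r, Option.some.injEq, eq_comm, decide_eq_false_iff_not] at hr1
    have h2 : p.2 = F r + 1 := by
      rcases hor with h | h
      · exact absurd (Finset.mem_image.2 ⟨p, hp, h⟩) hr1
      · exact h
    have hb := hM1 p hp
    have h3 := hsh (p.1 - 1) (by omega)
    have e : p.1 - 1 + 1 = p.1 := by omega
    rw [e, decide_eq_true (Finset.mem_image_of_mem _ hp)] at h3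
    obtain ⟨k, hk⟩ := hE.surj _ h3
    refine ⟨k, ?_⟩
    rw [hk, e, ← h2]
    exact hp
  choose g hg using hex
  have ginj : Function.Injective g := by
    intro a b hab
    have := huniq _ (hg a) _ (hg b) (E (g a) + 1) (Or.inl rfl) (Or.inl (by rw [hab]))
    have := congrArg Prod.snd this
    simp only at this
    exact hF.mono.injective (by omega)
  have gbij : Function.Bijective g := Finite.injective_iff_bijective.1 ginj
  refine ⟨Equiv.ofBijective g gbij, ?_, ?_⟩
  · intro r
    rw [← opener_lt_iff hE hF]
    have := (hM1 _ (hg r)).1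
    simp only at this
    simp only [Equiv.ofBijective_apply]
    omega
  · ext ⟨a, b⟩
    rw [mem_permMatch]
    constructor
    · rintro ⟨r, rfl, rfl⟩
      exact hg r
    · intro hp
      have hb := hM1 _ hp
      simp only at hb
      rcases prepr_cover hE hF (b - 1) (by omega) with ⟨k, hk⟩ | ⟨r, hr⟩
      · exfalso
        obtain ⟨r, rfl⟩ := gbij.2 k
        have := huniq _ hp _ (hg r) b (Or.inr rfl) (Or.inl (by simp only; omega))
        have := congrArg Prod.fst this
        simp only at this
        omega
      · have := huniq _ hp _ (hg r) b (Or.inr rfl) (Or.inr (by simp only; omega))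
        rw [Prod.mk.injEq] at this
        exact ⟨r, this.1.symm, this.2.symm⟩

theorem match_count {n : ℕ} {t : List Bool} {E F : Fin n → ℕ} (hE : PRepr true n t E)
    (hF : PRepr false n t F) :
    {M : Finset (ℕ × ℕ) | IsPerfectMatching n M ∧ MatchAvoids p213 M ∧
          MatchAvoids p321 M ∧ shapeOf n M = t}.ncard =
    {π : Equiv.Perm (Fin n) | (∀ r, (π r).val < F r - r.val) ∧
      ∀ a b c, ¬ CorePat (fun r => F r - r.val) π a b c}.ncard := by
  symm
  apply Set.ncard_congr (fun π _ => permMatch E F π)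
  · rintro π ⟨hb, hp⟩
    have h := (permMatch_avoid hE hF π hb).2 hp
    exact ⟨permMatch_perfect hE hF π hb, h.1, h.2, permMatch_shape hE hF π⟩
  · intro π ρ _ _ h
    apply Equiv.ext
    intro r
    have h1 := (mem_permMatch E F π _ _).2 ⟨r, rfl, rfl⟩
    rw [h, mem_permMatch] at h1
    obtain ⟨k, h2, h3⟩ := h1
    have : k = r := hF.mono.injective (by omega)
    subst this
    exact hE.mono.injective (by omega)
  · rintro M ⟨h1, h2, h3, h4⟩
    obtain ⟨π, hb, rfl⟩ := permMatch_surj hE hF M h1 h4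
    exact ⟨π, ⟨hb, (permMatch_avoid hE hF π hb).1 ⟨h2, h3⟩⟩, rfl⟩

theorem part_one_s19 (n : ℕ) (t : List Bool) (ht : IsDyckPath n t) :
      {M : Finset (ℕ × ℕ) | IsPerfectMatching n M ∧ MatchAvoids p213 M ∧
          MatchAvoids p321 M ∧ shapeOf n M = t}.ncard =
      {s : List Bool | IsDyckPath n s ∧ WeaklyBelow s t ∧ ¬ HasSWPeak n s t}.ncard := by
  obtain ⟨E, hE⟩ := exists_prepr true n t ht.1 ht.2.1
  obtain ⟨F, hF⟩ := exists_prepr false n t ht.1 (by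
      have := List.count_true_add_count_false t
      have := ht.1
      have := ht.2.1
      omega)
  rw [match_count hE hF, path_count hF]
  apply core_count (fun r => F r - r.val) (strictMono_gap hF.mono).2
  intro r
  have h1 := hF.count_self r
  have h2 := count_tf t (F r)
  have h3 := hF.len
  have h4 := hF.lt r
  have h5 := hE.count_le (F r)
  omega

theorem shape_count (n : ℕ) (M : Finset (ℕ × ℕ)) (i : ℕ) :
    ((shapeOf n M).take i).count true =
      ((Finset.range (min i (2 * n))).filter fun x => x + 1 ∈ M.image Prod.fst).card := by
  rw [count_take_eq]
  congr 1
  ext x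
  simp only [Finset.mem_filter, Finset.mem_range, shapeOf, List.getElem?_map]
  by_cases hx : x < 2 * n
  · rw [List.getElem?_range hx]
    simp [hx]
  · rw [List.getElem?_eq_none (by simpa using hx)]
    simp [hx]

theorem shape_dyck (n : ℕ) (M : Finset (ℕ × ℕ)) (hM : IsPerfectMatching n M) :
    IsDyckPath n (shapeOf n M) := by
  obtain ⟨hM1, hM2⟩ := hM
  have huniq : ∀ p ∈ M, ∀ q ∈ M, ∀ x, (p.1 = x ∨ p.2 = x) → (q.1 = x ∨ q.2 = x) → p = q := by
    intro p hp q hq x h1 h2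
    have a1 := hM1 p hp
    obtain ⟨z, _, hz⟩ := hM2 x (by omega) (by omega)
    rw [hz p ⟨hp, h1⟩, hz q ⟨hq, h2⟩]
  have hlen : (shapeOf n M).length = 2 * n := by simp [shapeOf]
  -- openers among the first `m` points
  have hT : ∀ m ≤ 2 * n, ((Finset.range m).filter fun x => x + 1 ∈ M.image Prod.fst).card =
      (M.filter fun p => p.1 ≤ m).card := by
    intro m hm
    symm
    apply Finset.card_bij (fun p _ => p.1 - 1)
    · intro p hp
      rw [Finset.mem_filter] at hp
      have := hM1 p hp.1
      rw [Finset.mem_filter, Finset.mem_range]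
      refine ⟨by omega, ?_⟩
      rw [show p.1 - 1 + 1 = p.1 by omega]
      exact Finset.mem_image_of_mem _ hp.1
    · intro p hp q hq h
      rw [Finset.mem_filter] at hp hq
      have := hM1 p hp.1
      have := hM1 q hq.1
      exact huniq p hp.1 q hq.1 p.1 (Or.inl rfl) (Or.inl (by omega))
    · intro x hx
      rw [Finset.mem_filter, Finset.mem_range, Finset.mem_image] at hx
      obtain ⟨hx1, p, hp, he⟩ := hx
      exact ⟨p, Finset.mem_filter.2 ⟨hp, by omega⟩, by omega⟩
  have hC : ∀ m ≤ 2 * n, ((Finset.range m).filter fun x => ¬ x + 1 ∈ M.image Prod.fst).card =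
      (M.filter fun p => p.2 ≤ m).card := by
    intro m hm
    symm
    apply Finset.card_bij (fun p _ => p.2 - 1)
    · intro p hp
      rw [Finset.mem_filter] at hp
      have := hM1 p hp.1
      rw [Finset.mem_filter, Finset.mem_range]
      refine ⟨by omega, ?_⟩
      rw [show p.2 - 1 + 1 = p.2 by omega, Finset.mem_image]
      rintro ⟨q, hq, he⟩
      have h3 := huniq p hp.1 q hq p.2 (Or.inr rfl) (Or.inl he)
      subst h3
      omega
    · intro p hp q hq h
      rw [Finset.mem_filter] at hp hq
      have := hM1 p hp.1
      have := hM1 q hq.1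
      exact huniq p hp.1 q hq.1 p.2 (Or.inr rfl) (Or.inr (by omega))
    · intro x hx
      rw [Finset.mem_filter, Finset.mem_range] at hx
      obtain ⟨hx1, hx2⟩ := hx
      obtain ⟨p, ⟨hp, hor⟩, _⟩ := hM2 (x + 1) (by omega) (by omega)
      have h2 : p.2 = x + 1 := by
        rcases hor with h | h
        · exact absurd (Finset.mem_image.2 ⟨p, hp, h⟩) hx2
        · exact h
      exact ⟨p, Finset.mem_filter.2 ⟨hp, by omega⟩, by omega⟩
  have hsum : ∀ m, ((Finset.range m).filter fun x => x + 1 ∈ M.image Prod.fst).card +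
      ((Finset.range m).filter fun x => ¬ x + 1 ∈ M.image Prod.fst).card = m := by
    intro m
    rw [Finset.card_filter_add_card_filter_not, Finset.card_range]
  refine ⟨hlen, ?_, fun i => ?_⟩
  · have h1 := shape_count n M (2 * n)
    rw [← hlen, List.take_length, hlen, min_self] at h1
    have h2 := hsum (2 * n)
    have h3 := hT (2 * n) le_rfl
    have h4 := hC (2 * n) le_rfl
    have h5 : (M.filter fun p => p.1 ≤ 2 * n) = M :=
      Finset.filter_true_of_mem fun p hp => by have := hM1 p hp; omega
    have h6 : (M.filter fun p => p.2 ≤ 2 * n) = M :=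
      Finset.filter_true_of_mem fun p hp => by have := hM1 p hp; omega
    rw [h5] at h3
    rw [h6] at h4
    omega
  · have h1 := shape_count n M i
    have h2 := count_tf (shapeOf n M) i
    have h3 := hT (min i (2 * n)) (by omega)
    have h4 := hC (min i (2 * n)) (by omega)
    have h5 := hsum (min i (2 * n))
    have h6 : (M.filter fun p => p.2 ≤ min i (2 * n)).card ≤
        (M.filter fun p => p.1 ≤ min i (2 * n)).card := by
      apply Finset.card_le_card
      intro p hp
      rw [Finset.mem_filter] at hp ⊢
      have := hM1 p hp.1
      exact ⟨hp.1, by omega⟩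
    omega

theorem dyck_finite (n : ℕ) : {t : List Bool | IsDyckPath n t}.Finite :=
  (List.finite_length_eq Bool (2 * n)).subset fun _ ht => ht.1

theorem matching_finite (n : ℕ) : {M : Finset (ℕ × ℕ) | IsPerfectMatching n M}.Finite := by
  apply ((Finset.range (2 * n + 1) ×ˢ Finset.range (2 * n + 1)).powerset.finite_toSet).subset
  intro M hM
  rw [Finset.mem_coe, Finset.mem_powerset]
  intro p hp
  have := hM.1 p hp
  rw [Finset.mem_product, Finset.mem_range, Finset.mem_range]
  omega

theorem ncard_fiber {α β : Type*} [DecidableEq β] (A : Set α) (hA : A.Finite) (D : Finset β)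
    (φ : α → β) (h : ∀ a ∈ A, φ a ∈ D) :
    A.ncard = ∑ t ∈ D, {a | a ∈ A ∧ φ a = t}.ncard := by
  classical
  rw [Set.ncard_eq_toFinset_card A hA]
  rw [Finset.card_eq_sum_card_fiberwise (f := φ) (t := D)
    (fun a ha => h a (by simpa using ha))]
  apply Finset.sum_congr rfl
  intro t _
  rw [← Set.ncard_coe_finset]
  congr 1
  ext a
  simp

/-- For every `F ∈ F_n`, `|M_F(213,321)|` equals the number of Dyck paths
`D_0` weakly below `D_F` having no peak strictly southwest of a vertex of `D_F`;
consequently `|M_n(213,321)| = |A²_n|`. -/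
theorem card_matchings_213_321 (n : ℕ) (hn : 0 < n) :
    (∀ t : List Bool, IsDyckPath n t →
      {M : Finset (ℕ × ℕ) | IsPerfectMatching n M ∧ MatchAvoids p213 M ∧
          MatchAvoids p321 M ∧ shapeOf n M = t}.ncard =
      {s : List Bool | IsDyckPath n s ∧ WeaklyBelow s t ∧ ¬ HasSWPeak n s t}.ncard) ∧
    mcount2 p213 p321 n =
      {st : List Bool × List Bool | IsDyckPath n st.2 ∧ IsDyckPath n st.1 ∧
          WeaklyBelow st.1 st.2 ∧ ¬ HasSWPeak n st.1 st.2}.ncard := by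
  refine ⟨fun t ht => part_one_s19 n t ht, ?_⟩
  unfold mcount2
  rw [ncard_fiber _ ((matching_finite n).subset fun M hM => hM.1) (dyck_finite n).toFinset
    (shapeOf n) (fun M hM => by simpa using shape_dyck n M hM.1)]
  rw [ncard_fiber {st : List Bool × List Bool | IsDyckPath n st.2 ∧ IsDyckPath n st.1 ∧
          WeaklyBelow st.1 st.2 ∧ ¬ HasSWPeak n st.1 st.2}
    (((dyck_finite n).prod (dyck_finite n)).subset fun st hst => ⟨hst.2.1, hst.1⟩)
    (dyck_finite n).toFinset Prod.snd (fun st hst => by simpa using hst.1)]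
  apply Finset.sum_congr rfl
  intro t ht
  have ht' : IsDyckPath n t := by simpa using ht
  have e1 : {M | M ∈ {M : Finset (ℕ × ℕ) | IsPerfectMatching n M ∧ MatchAvoids p213 M ∧
      MatchAvoids p321 M} ∧ shapeOf n M = t} = {M : Finset (ℕ × ℕ) | IsPerfectMatching n M ∧
        MatchAvoids p213 M ∧ MatchAvoids p321 M ∧ shapeOf n M = t} := by
    ext M
    simp only [Set.mem_ofPred_eq]
    tauto
  rw [e1, part_one_s19 n t ht']
  apply Set.ncard_congr (fun s _ => (s, t))
  · rintro s hs
    exact ⟨⟨ht', hs⟩, rfl⟩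
  · intro a b _ _ h
    exact congrArg Prod.fst h
  · rintro ⟨a, b⟩ ⟨hab, rfl⟩
    exact ⟨a, hab.2, rfl⟩
end
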